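/- arXiv:1601.07136 — 2 statements merged into one kernel-verified Lean document; each statement's English description precedes it below -/
import Mathlib

section
/- Let T = ℂ[[x₁, …, x_n]] be the formal power series ring in n ≥ 2 variables over the complex numbers. Then for any integers d and t with 1 ≤ d ≤ n − 1, 0 ≤ t ≤ n − 1, and d − 1 ≤ t, there exists a local unique factorization domain A such that the completion of A is T, α(A,(0)) = t, and α(A,pA) = d − 1 for every height one prime ideal pA of A. -/
universe u

open IsLocalRing Cardinal

/-- The height of an ideal: infimum of heights of primes containing it. -/
noncomputable def idealHt {T : Type*} [CommRing T] (I : Ideal T) : ℕ∞ :=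
  ⨅ (p : PrimeSpectrum T) (_ : I ≤ p.asIdeal), Order.height p

/-- `T` is equidimensional: `dim (T/p) = dim T` for every minimal prime `p`. -/
def IsEquidim (T : Type*) [CommRing T] : Prop :=
  ∀ p ∈ minimalPrimes T, ringKrullDim (T ⧸ p) = ringKrullDim T

/-- `depth T > 1`: there is a regular sequence of length two inside the maximal ideal. -/
def DepthGTOne (T : Type*) [CommRing T] [IsLocalRing T] : Prop :=
  ∃ x y : T, x ∈ maximalIdeal T ∧ y ∈ maximalIdeal T ∧ x ∈ nonZeroDivisors T ∧
    Ideal.Quotient.mk (Ideal.span {x}) y ∈ nonZeroDivisors (T ⧸ Ideal.span {x})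

/-- A local (Noetherian) unique factorization domain `A` together with an identification
of its `maximalIdeal A`-adic completion with `T`. -/
structure LocalUFDWithCompletion (T : Type u) [CommRing T] : Type (u + 1) where
  /-- the underlying ring -/
  A : Type u
  [commRing : CommRing A]
  [isDomain : IsDomain A]
  [isNoetherian : IsNoetherianRing A]
  [isLocalRing : IsLocalRing A]
  [ufd : UniqueFactorizationMonoid A]
  /-- the natural map from `A` to its completion `T` -/
  toCompletion : A →+* T
  /-- the completion of `A` is `T` -/
  completionEquiv : AdicCompletion (IsLocalRing.maximalIdeal A) A ≃+* T
  completionEquiv_comp : ∀ a : A,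
    completionEquiv (algebraMap A (AdicCompletion (IsLocalRing.maximalIdeal A) A) a) =
      toCompletion a

attribute [instance] LocalUFDWithCompletion.commRing LocalUFDWithCompletion.isDomain
  LocalUFDWithCompletion.isNoetherian LocalUFDWithCompletion.isLocalRing
  LocalUFDWithCompletion.ufd

/-- `α(A, p)`: the Krull dimension of the formal fiber ring `T ⊗_A κ(p)` of `A` at the
prime ideal `p`, where `κ(p) = A_p / p A_p` and `T` is the completion of `A`. -/
noncomputable def alphaAt {T : Type u} [CommRing T] (X : LocalUFDWithCompletion T)
    (p : Ideal X.A) (hp : p.IsPrime) : WithBot ℕ∞ :=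
  letI := X.toCompletion.toAlgebra
  haveI := hp
  ringKrullDim (TensorProduct X.A T
    (Localization.AtPrime p ⧸ IsLocalRing.maximalIdeal (Localization.AtPrime p)))



section P1part
open Polynomial
namespace LUFD

/-- valuation-type condition at `q` -/
def GoodAt {T : Type} [CommRing T] (R : Subring T) (q : Ideal T) : Prop :=
  ∀ a ∈ R, ∀ b ∈ R, ∃ r ∈ R, ∃ s ∈ R, r * a = s * b ∧ (r ∉ q ∨ s ∉ q)

/-- `s` is transcendental over `R` modulo `P` -/
def Trans {T : Type} [CommRing T] (R : Subring T) (P : Ideal T) (s : T) : Prop :=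
  ∀ f : Polynomial R, Polynomial.aeval s f ∈ P → ∀ i, (f.coeff i : T) ∈ P

/-- adjoining one element -/
def adj {T : Type} [CommRing T] (R : Subring T) (s : T) : Subring T :=
  R ⊔ Subring.closure {s}

section
variable {T : Type} [CommRing T]

lemma le_adj (R : Subring T) (s : T) : R ≤ adj R s := le_sup_left

lemma mem_adj (R : Subring T) (s : T) : s ∈ adj R s :=
  (le_sup_right : Subring.closure {s} ≤ adj R s) (Subring.subset_closure rfl)

lemma adj_le {R R' : Subring T} {s : T} (h : R ≤ R') (hs : s ∈ R') : adj R s ≤ R' :=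
  sup_le h ((Subring.closure_le).2 (by simpa using hs))

lemma aeval_mem_adj (R : Subring T) (s : T) (f : R[X]) : aeval s f ∈ adj R s := by
  rw [aeval_eq_sum_range]
  refine Subring.sum_mem _ fun i _ => ?_
  rw [Algebra.smul_def]
  exact mul_mem (le_adj R s (f.coeff i).2) (pow_mem (mem_adj R s) i)

lemma exists_of_mem_adj {R : Subring T} {s x : T} (hx : x ∈ adj R s) :
    ∃ f : R[X], aeval s f = x := by
  have : adj R s ≤ (aeval (R := R) s).toRingHom.range := by
    apply adj_le
    · intro r hr
      exact ⟨C ⟨r, hr⟩, by simp; rfl⟩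
    · exact ⟨X, by simp⟩
  exact this hx

/-- content extraction -/
lemma content {R : Subring T} {q : Ideal T} [hq : q.IsPrime] (hG : GoodAt R q) :
    ∀ (n : ℕ) (f : R[X]), f.natDegree < n → ∃ (ρ e : R) (g : R[X]), (ρ : T) ∉ q ∧
      C ρ * f = C e * g ∧ ∃ i, (g.coeff i : T) ∉ q := by
  have h1 : (1 : T) ∉ q := fun h => hq.ne_top ((Ideal.eq_top_iff_one q).2 h)
  intro n
  induction n with
  | zero => intro f hf; omega
  | succ n ih =>
    intro f hf
    by_cases hn : f.natDegree = 0
    · refine ⟨1, f.coeff 0, 1, by simpa using h1, ?_, 0, by simpa using h1⟩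
      rw [Polynomial.eq_C_of_natDegree_eq_zero hn]; simp
    obtain ⟨ρ, e, g, hρ, hfg, i, hi⟩ := ih f.divX (by
      rw [natDegree_divX_eq_natDegree_tsub_one]; omega)
    obtain ⟨r, hr, s, hs, hrs, hor⟩ := hG (f.coeff 0) (f.coeff 0).2 e e.2
    have hrs' : (⟨r, hr⟩ : R) * f.coeff 0 = ⟨s, hs⟩ * e := Subtype.ext hrs
    generalize hr0 : (⟨r, hr⟩ : R) = r0 at hrs'
    generalize hs0 : (⟨s, hs⟩ : R) = s0 at hrs'
    have hr1 : (r0 : T) = r := by rw [← hr0]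
    have hs1 : (s0 : T) = s := by rw [← hs0]
    have hC : C r0 * C (f.coeff 0) = C s0 * C e := by rw [← C_mul, hrs', C_mul]
    have hf' := f.divX_mul_X_add
    by_cases hrq : r ∈ q
    · have hsq : s ∉ q := by tauto
      refine ⟨s0 * ρ, f.coeff 0, C (s0 * ρ) + C r0 * (g * X), ?_, ?_, 0, ?_⟩
      · push_cast; rw [hs1]; exact fun h => (hq.mem_or_mem h).elim hsq hρ
      · calc C (s0 * ρ) * f = C (s0 * ρ) * (f.divX * X + C (f.coeff 0)) := by rw [hf']
          _ = C s0 * (C ρ * f.divX) * X + C (s0 * ρ) * C (f.coeff 0) := by rw [C_mul]; ring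
          _ = (C s0 * C e) * g * X + C (s0 * ρ) * C (f.coeff 0) := by rw [hfg]; ring
          _ = _ := by rw [← hC]; ring
      · simp only [coeff_add, coeff_C_zero, mul_coeff_zero, coeff_X_zero, mul_zero,
          add_zero]
        push_cast; rw [hs1]; exact fun h => (hq.mem_or_mem h).elim hsq hρ
    · refine ⟨r0 * ρ, e, C (s0 * ρ) + C r0 * (g * X), ?_, ?_, i + 1, ?_⟩
      · push_cast; rw [hr1]; exact fun h => (hq.mem_or_mem h).elim hrq hρ
      · calc C (r0 * ρ) * f = C (r0 * ρ) * (f.divX * X + C (f.coeff 0)) := by rw [hf']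
          _ = C r0 * (C ρ * f.divX) * X + C ρ * (C r0 * C (f.coeff 0)) := by rw [C_mul]; ring
          _ = C r0 * (C ρ * f.divX) * X + C ρ * (C s0 * C e) := by rw [hC]
          _ = _ := by rw [hfg, C_mul]; ring
      · simp only [coeff_add, coeff_C_succ, coeff_C_mul, coeff_mul_X, zero_add]
        push_cast; rw [hr1]; exact fun h => (hq.mem_or_mem h).elim hrq hi

/-- adjoining an element transcendental modulo `q` -/
lemma GoodAt.adj_trans {R : Subring T} {q : Ideal T} [hq : q.IsPrime] (hG : GoodAt R q)
    {s : T} (hs : Trans R q s) : GoodAt (adj R s) q := by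
  intro a ha b hb
  obtain ⟨f1, rfl⟩ := exists_of_mem_adj ha
  obtain ⟨f2, rfl⟩ := exists_of_mem_adj hb
  obtain ⟨ρ1, e1, g1, hρ1, h1, i1, hi1⟩ := content hG _ f1 (Nat.lt_succ_self _)
  obtain ⟨ρ2, e2, g2, hρ2, h2, i2, hi2⟩ := content hG _ f2 (Nat.lt_succ_self _)
  have hg1 : aeval s g1 ∉ q := fun h => hi1 (hs g1 h i1)
  have hg2 : aeval s g2 ∉ q := fun h => hi2 (hs g2 h i2)
  obtain ⟨r, hr, σ, hσ, hrs, hor⟩ := hG e1 e1.2 e2 e2.2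
  have h1' : (ρ1 : T) * aeval s f1 = e1 * aeval s g1 := by
    have := congrArg (aeval s) h1
    rw [map_mul, map_mul, aeval_C, aeval_C] at this; exact this
  have h2' : (ρ2 : T) * aeval s f2 = e2 * aeval s g2 := by
    have := congrArg (aeval s) h2
    rw [map_mul, map_mul, aeval_C, aeval_C] at this; exact this
  refine ⟨r * ρ1 * aeval s g2, mul_mem (mul_mem (le_adj R s hr) (le_adj R s ρ1.2))
    (aeval_mem_adj R s g2), σ * ρ2 * aeval s g1, mul_mem (mul_mem (le_adj R s hσ)
    (le_adj R s ρ2.2)) (aeval_mem_adj R s g1), ?_, ?_⟩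
  · calc r * ρ1 * aeval s g2 * aeval s f1 = r * aeval s g2 * (ρ1 * aeval s f1) := by ring
      _ = (r * e1) * aeval s g1 * aeval s g2 := by rw [h1']; ring
      _ = σ * aeval s g1 * (e2 * aeval s g2) := by rw [hrs]; ring
      _ = _ := by rw [← h2']; ring
  · rcases hor with h | h
    · left; intro h'
      rcases hq.mem_or_mem h' with h' | h'
      · exact (hq.mem_or_mem h').elim h hρ1
      · exact hg2 h'
    · right; intro h'
      rcases hq.mem_or_mem h' with h' | h'
      · exact (hq.mem_or_mem h').elim h hρ2
      · exact hg1 h'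

lemma bezout_poly {R : Type} [CommRing R] [IsDomain R] (f1 f2 : R[X]) :
    ∃ (h1 h2 u v : R[X]) (c : R), c ≠ 0 ∧ h2 * f1 = h1 * f2 ∧ u * h1 + v * h2 = C c := by
  classical
  let K := FractionRing R
  have key : ∀ p : K[X], ∃ (d : R) (p' : R[X]), d ≠ 0 ∧ C (algebraMap R K d) * p = p'.map (algebraMap R K) := by
    intro p
    obtain ⟨b, hbm, hb⟩ := IsLocalization.integerNormalization_spec (nonZeroDivisors R) p
    refine ⟨b, IsLocalization.integerNormalization (nonZeroDivisors R) p,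
      nonZeroDivisors.ne_zero hbm, ?_⟩
    rw [hb, ← Polynomial.smul_eq_C_mul, algebraMap_smul]
  have inj : Function.Injective (mapRingHom (algebraMap R K)) :=
    map_injective _ (IsFractionRing.injective R K)
  let F1 := f1.map (algebraMap R K)
  let F2 := f2.map (algebraMap R K)
  by_cases h0 : F1 = 0 ∧ F2 = 0
  · refine ⟨1, 1, 1, 0, 1, one_ne_zero, ?_, by simp⟩
    have e1 : f1 = 0 := inj (by simpa [F1] using h0.1)
    have e2 : f2 = 0 := inj (by simpa [F2] using h0.2)
    simp [e1, e2]
  · have hg0 : EuclideanDomain.gcd F1 F2 ≠ 0 := by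
      rwa [Ne, EuclideanDomain.gcd_eq_zero_iff]
    obtain ⟨H1, hH1⟩ := EuclideanDomain.gcd_dvd_left F1 F2
    obtain ⟨H2, hH2⟩ := EuclideanDomain.gcd_dvd_right F1 F2
    have hbz := EuclideanDomain.gcd_eq_gcd_ab F1 F2
    set g := EuclideanDomain.gcd F1 F2
    set U := EuclideanDomain.gcdA F1 F2
    set V := EuclideanDomain.gcdB F1 F2
    have hb1 : U * H1 + V * H2 = 1 := by
      apply mul_left_cancel₀ hg0
      calc g * (U * H1 + V * H2) = (g * H1) * U + (g * H2) * V := by ring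
        _ = g * 1 := by rw [← hH1, ← hH2, ← hbz, mul_one]
    obtain ⟨d1, h1, hd1, e1⟩ := key H1
    obtain ⟨d2, h2, hd2, e2⟩ := key H2
    obtain ⟨d3, u, hd3, e3⟩ := key U
    obtain ⟨d4, v, hd4, e4⟩ := key V
    refine ⟨C d2 * h1, C d1 * h2, C d4 * u, C d3 * v, d1 * d2 * d3 * d4, by simp [*], ?_, ?_⟩
    · apply inj
      simp only [coe_mapRingHom, Polynomial.map_mul, map_C, ← e1, ← e2]
      change _ * F1 = _ * F2
      linear_combination (C (algebraMap R K d1) * C (algebraMap R K d2)) * (H2 * hH1 - H1 * hH2)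
    · apply inj
      simp only [coe_mapRingHom, Polynomial.map_mul, Polynomial.map_add, map_C, ← e1, ← e2, ← e3, ← e4, map_mul]
      linear_combination (C (algebraMap R K d1) * C (algebraMap R K d2) * C (algebraMap R K d3) * C (algebraMap R K d4)) * hb1

lemma GoodAt.adj_of_disjoint [IsDomain T] {R : Subring T} {q : Ideal T} [hq : q.IsPrime]
    (hR : ∀ x ∈ R, x ∈ q → x = 0) (s : T) : GoodAt (adj R s) q := by
  intro a ha b hb
  obtain ⟨f1, rfl⟩ := exists_of_mem_adj ha
  obtain ⟨f2, rfl⟩ := exists_of_mem_adj hb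
  obtain ⟨h1, h2, u, v, c, hc, e1, e2⟩ := bezout_poly f1 f2
  refine ⟨_, aeval_mem_adj R s h2, _, aeval_mem_adj R s h1, ?_, ?_⟩
  · rw [← map_mul, e1, map_mul]
  · by_contra! hcon
    have h3 : aeval s u * aeval s h1 + aeval s v * aeval s h2 = (c : T) := by
      rw [← map_mul, ← map_mul, ← map_add, e2]; simp; rfl
    have : (c : T) ∈ q := by
      rw [← h3]; exact q.add_mem (q.mul_mem_left _ hcon.2) (q.mul_mem_left _ hcon.1)
    exact hc (Subtype.ext (hR _ c.2 this))

/-- localization-type extensions -/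
lemma GoodAt.of_denom {R R' : Subring T} {q : Ideal T} [hq : q.IsPrime] (hG : GoodAt R q)
    (hle : R ≤ R') (h : ∀ x ∈ R', ∃ ρ ∈ R, ρ ∉ q ∧ ρ * x ∈ R) : GoodAt R' q := by
  intro a ha b hb
  obtain ⟨ρ, hρ, hρq, ha'⟩ := h a ha
  obtain ⟨σ, hσ, hσq, hb'⟩ := h b hb
  obtain ⟨r, hr, s, hs, e, hor⟩ := hG _ ha' _ hb'
  refine ⟨r * ρ, hle (mul_mem hr hρ), s * σ, hle (mul_mem hs hσ), by rw [mul_assoc, e, mul_assoc], ?_⟩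
  rcases hor with h | h
  · exact Or.inl fun h' => (hq.mem_or_mem h').elim h hρq
  · exact Or.inr fun h' => (hq.mem_or_mem h').elim h hσq

lemma denom_adj {R : Subring T} {q : Ideal T} [hq : q.IsPrime] {t : T}
    (h : ∃ ρ ∈ R, ρ ∉ q ∧ ρ * t ∈ R) : ∀ x ∈ adj R t, ∃ ρ ∈ R, ρ ∉ q ∧ ρ * x ∈ R := by
  have h1 : (1 : T) ∉ q := fun h => hq.ne_top ((Ideal.eq_top_iff_one q).2 h)
  intro x hx
  have hx' : x ∈ Subring.closure ((R : Set T) ∪ {t}) := by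
    rw [Subring.closure_union, Subring.closure_eq]; exact hx
  clear hx
  induction hx' using Subring.closure_induction with
  | mem x hx =>
    rcases hx with hx | hx
    · exact ⟨1, one_mem _, h1, by simpa using hx⟩
    · rw [Set.mem_singleton_iff] at hx; rw [hx]; exact h
  | zero => exact ⟨1, one_mem _, h1, by simp⟩
  | one => exact ⟨1, one_mem _, h1, by simp⟩
  | add x y hx hy ihx ihy =>
    obtain ⟨ρ, hρ, hρq, a⟩ := ihx
    obtain ⟨σ, hσ, hσq, b⟩ := ihy
    refine ⟨ρ * σ, mul_mem hρ hσ, fun h => (hq.mem_or_mem h).elim hρq hσq, ?_⟩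
    have : ρ * σ * (x + y) = σ * (ρ * x) + ρ * (σ * y) := by ring
    rw [this]; exact add_mem (mul_mem hσ a) (mul_mem hρ b)
  | neg x hx ihx =>
    obtain ⟨ρ, hρ, hρq, a⟩ := ihx
    exact ⟨ρ, hρ, hρq, by simpa using neg_mem a⟩
  | mul x y hx hy ihx ihy =>
    obtain ⟨ρ, hρ, hρq, a⟩ := ihx
    obtain ⟨σ, hσ, hσq, b⟩ := ihy
    refine ⟨ρ * σ, mul_mem hρ hσ, fun h => (hq.mem_or_mem h).elim hρq hσq, ?_⟩
    have : ρ * σ * (x * y) = (ρ * x) * (σ * y) := by ring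
    rw [this]; exact mul_mem a b

end
end LUFD

end P1part

section P2part
open Polynomial Cardinal
namespace LUFD

lemma avoid {ι : Type} (hι : #ι < 𝔠) (bad : ι → Set ℂ) (hb : ∀ i, (bad i).Finite) :
    ∃ z : ℂ, ∀ i, z ∉ bad i := by
  by_contra! h
  have hu : (⋃ i, bad i) = Set.univ := by
    ext z; simpa using h z
  have h1 : #(⋃ i, bad i) ≤ #ι * ℵ₀ := by
    refine (Cardinal.mk_iUnion_le_sum_mk).trans ?_
    calc Cardinal.sum (fun i => #(bad i)) ≤ Cardinal.sum (fun _ : ι => ℵ₀) :=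
          Cardinal.sum_le_sum _ _ fun i => ((hb i).lt_aleph0).le
      _ = #ι * ℵ₀ := by simp
  have h2 : #ι * ℵ₀ < 𝔠 := Cardinal.mul_lt_of_lt Cardinal.aleph0_le_continuum hι
    Cardinal.aleph0_lt_continuum
  rw [hu, Cardinal.mk_univ, Cardinal.mk_complex] at h1
  exact absurd h2 (not_lt.2 h1)

section
variable {T : Type} [CommRing T] [Algebra ℂ T]

lemma alg_inj (Q : Ideal T) [hQ : Q.IsPrime] :
    Function.Injective (fun z : ℂ => Ideal.Quotient.mk Q (algebraMap ℂ T z)) :=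
  ((Ideal.Quotient.mk Q).comp (algebraMap ℂ T)).injective

lemma fin_bad (Q : Ideal T) [hQ : Q.IsPrime] (f : T[X]) (hf : ∃ i, f.coeff i ∉ Q) :
    {z : ℂ | eval (algebraMap ℂ T z) f ∈ Q}.Finite := by
  have hne : f.map (Ideal.Quotient.mk Q) ≠ 0 := by
    intro h
    obtain ⟨i, hi⟩ := hf
    apply hi
    have := congrArg (fun p => p.coeff i) h
    simpa [Ideal.Quotient.eq_zero_iff_mem] using this
  have : {x | (f.map (Ideal.Quotient.mk Q)).IsRoot x}.Finite := by
    exact Polynomial.finite_setOf_isRoot hne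
  refine (this.preimage ((alg_inj Q).injOn)).subset ?_
  intro z hz
  simp only [Set.mem_preimage, Set.mem_setOf_eq, IsRoot.def]
  change eval (Ideal.Quotient.mk Q (algebraMap ℂ T z)) (f.map (Ideal.Quotient.mk Q)) = 0
  rw [eval_map, eval₂_at_apply, Ideal.Quotient.eq_zero_iff_mem]
  exact hz

lemma comp_coeff (P : Ideal T) [hP : P.IsPrime] (f : T[X]) (hf : ∃ i, f.coeff i ∉ P) (t w : T)
    (hw : w ∉ P) : ∃ i, (f.comp (C t + C w * X)).coeff i ∉ P := by
  by_contra! h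
  have h0 : (f.comp (C t + C w * X)).map (Ideal.Quotient.mk P) = 0 := by
    ext i; simpa [Ideal.Quotient.eq_zero_iff_mem] using h i
  rw [Polynomial.map_comp, comp_eq_zero_iff] at h0
  rcases h0 with h0 | h0
  · obtain ⟨i, hi⟩ := hf
    apply hi
    have := congrArg (fun p => p.coeff i) h0
    simpa [Ideal.Quotient.eq_zero_iff_mem] using this
  · have := congrArg (fun p => p.coeff 1) h0.2
    simp [Ideal.Quotient.eq_zero_iff_mem, coeff_C] at this
    exact hw this

lemma exists_trans (R : Subring T) (hR : #R < 𝔠) {ι : Type} (hι : #ι < 𝔠) (P : ι → Ideal T)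
    (hP : ∀ i, (P i).IsPrime) (t w : ι → T) :
    ∃ z : ℂ, ∀ i, w i ∉ P i → Trans R (P i) (t i + algebraMap ℂ T z * w i) := by
  classical
  have hcard : #(ι × R[X]) < 𝔠 := by
    rw [Cardinal.mk_prod, Cardinal.lift_id, Cardinal.lift_id]
    refine Cardinal.mul_lt_of_lt Cardinal.aleph0_le_continuum hι ?_
    exact (Polynomial.cardinalMk_le_max).trans_lt (max_lt hR Cardinal.aleph0_lt_continuum)
  obtain ⟨z, hz⟩ := avoid hcard (fun x => if w x.1 ∉ P x.1 ∧ ∃ i, (x.2.coeff i : T) ∉ P x.1 then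
    {z : ℂ | aeval (t x.1 + algebraMap ℂ T z * w x.1) x.2 ∈ P x.1} else ∅) (by
      rintro ⟨i, f⟩
      dsimp only
      split_ifs with h
      · have := hP i
        have h2 := comp_coeff (P i) (f.map (algebraMap R T))
          (by obtain ⟨j, hj⟩ := h.2; exact ⟨j, by rw [coeff_map]; exact hj⟩) (t i) (w i) h.1
        refine (fin_bad (P i) _ h2).subset ?_
        intro z hz
        simp only [Set.mem_setOf_eq, eval_comp, eval_add, eval_C, eval_mul, eval_X,
          eval_map_algebraMap] at hz ⊢
        rwa [mul_comm (w i)]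
      · exact Set.finite_empty)
  refine ⟨z, fun i hi f hf => ?_⟩
  by_contra! h
  have := hz (i, f)
  simp only [if_pos (And.intro hi h)] at this
  exact this hf

/-- Data for the construction. -/
structure Data (T : Type) [CommRing T] where
  /-- prime cut out of the generic fibre -/
  Q0 : Ideal T
  /-- the controlled primes -/
  Qs : Set (Ideal T)
  q0prime : Q0.IsPrime
  prime : ∀ q ∈ Qs, q.IsPrime
  fin : ∀ r ∉ Q0, {q ∈ Qs | r ∈ q}.Finite
  cop : ∀ a b : T, ∃ α β, α * b = β * a ∧ ∀ r s, r * b = s * a → α ∣ r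

/-- good subrings -/
def Good (D : Data T) (R : Subring T) : Prop :=
  (∀ x ∈ R, x ∈ D.Q0 → x = 0) ∧ ∀ q ∈ D.Qs, GoodAt R q

/-- the relevant primes -/
def Rel (D : Data T) (R : Subring T) : Set (Ideal T) := {q ∈ D.Qs | ∃ x ∈ R, x ≠ 0 ∧ x ∈ q}

lemma card_rel (D : Data T) {R : Subring T} (hG : Good D R) (hR : #R < 𝔠) :
    #(Rel D R) < 𝔠 := by
  have hsub : Rel D R ⊆ ⋃ x : {x : R // (x : T) ≠ 0}, {q ∈ D.Qs | (x.1 : T) ∈ q} := by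
    rintro q ⟨hq, x, hx, hx0, hxq⟩
    exact Set.mem_iUnion.2 ⟨⟨⟨x, hx⟩, hx0⟩, hq, hxq⟩
  refine (Cardinal.mk_le_mk_of_subset hsub).trans_lt ?_
  refine (Cardinal.mk_iUnion_le_sum_mk).trans_lt ?_
  calc Cardinal.sum (fun x : {x : R // (x : T) ≠ 0} => #{q ∈ D.Qs | (x.1 : T) ∈ q})
      ≤ Cardinal.sum (fun _ : {x : R // (x : T) ≠ 0} => ℵ₀) :=
        Cardinal.sum_le_sum _ _ fun x =>
          ((D.fin _ fun h => x.2 (hG.1 _ x.1.2 h)).lt_aleph0).le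
    _ = #{x : R // (x : T) ≠ 0} * ℵ₀ := by simp
    _ < 𝔠 := Cardinal.mul_lt_of_lt Cardinal.aleph0_le_continuum
      ((Cardinal.mk_subtype_le _).trans_lt hR) Cardinal.aleph0_lt_continuum

lemma small_adj {R : Subring T} (hR : #R < 𝔠) (s : T) : #(adj R s) < 𝔠 := by
  refine (Cardinal.mk_le_of_surjective (f := fun f : R[X] =>
    (⟨aeval s f, aeval_mem_adj R s f⟩ : adj R s)) ?_).trans_lt
    ((Polynomial.cardinalMk_le_max).trans_lt (max_lt hR Cardinal.aleph0_lt_continuum))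
  rintro ⟨x, hx⟩
  obtain ⟨f, hf⟩ := exists_of_mem_adj hx
  exact ⟨f, Subtype.ext hf⟩

/-- finite extensions -/
def Ext (R R' : Subring T) : Prop := Relation.ReflTransGen (fun A B => ∃ s, B = adj A s) R R'

lemma Ext.adj (R : Subring T) (s : T) : Ext R (adj R s) := Relation.ReflTransGen.single ⟨s, rfl⟩

lemma Ext.le {R R' : Subring T} (h : Ext R R') : R ≤ R' := by
  induction h with
  | refl => exact le_rfl
  | tail _ h ih => obtain ⟨s, rfl⟩ := h; exact ih.trans (le_adj _ _)

lemma Ext.small {R R' : Subring T} (h : Ext R R') (hR : #R < 𝔠) : #R' < 𝔠 := by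
  induction h with
  | refl => exact hR
  | tail _ h ih => obtain ⟨s, rfl⟩ := h; exact small_adj ih s

lemma Ext.finite {R R' : Subring T} (h : Ext R R') :
    ∃ F : Set T, F.Finite ∧ R' = R ⊔ Subring.closure F := by
  induction h with
  | refl => exact ⟨∅, Set.finite_empty, by simp⟩
  | tail _ h ih =>
    obtain ⟨s, rfl⟩ := h
    obtain ⟨F, hF, rfl⟩ := ih
    exact ⟨F ∪ {s}, hF.union (Set.finite_singleton s), by
      rw [LUFD.adj, Subring.closure_union, sup_assoc]⟩

lemma disjoint_trans {R : Subring T} {P : Ideal T} (h : ∀ x ∈ R, x ∈ P → x = 0) {s : T}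
    (hs : Trans R P s) : ∀ x ∈ adj R s, x ∈ P → x = 0 := by
  intro x hx hxP
  obtain ⟨f, rfl⟩ := exists_of_mem_adj hx
  have : f = 0 := by
    ext i
    exact h _ (f.coeff i).2 (hs f hxP i)
  rw [this, map_zero]

lemma disjoint_denom [IsDomain T] {R R' : Subring T} {P : Ideal T}
    (h : ∀ x ∈ R, x ∈ P → x = 0) (hd : ∀ x ∈ R', ∃ ρ ∈ R, ρ ∉ P ∧ ρ * x ∈ R) :
    ∀ x ∈ R', x ∈ P → x = 0 := by
  intro x hx hxP
  obtain ⟨ρ, hρ, hρP, hm⟩ := hd x hx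
  have := h _ hm (P.mul_mem_left _ hxP)
  rcases mul_eq_zero.1 this with h0 | h0
  · exact absurd (h0 ▸ P.zero_mem) hρP
  · exact h0

lemma good_adj [IsDomain T] {D : Data T} {R : Subring T} (hG : Good D R) {s : T}
    (h0 : Trans R D.Q0 s) (h : ∀ q ∈ Rel D R, Trans R q s) : Good D (adj R s) := by
  refine ⟨disjoint_trans hG.1 h0, fun q hq => ?_⟩
  have := D.prime q hq
  by_cases hr : q ∈ Rel D R
  · exact (hG.2 q hq).adj_trans (h q hr)
  · apply GoodAt.adj_of_disjoint
    intro x hx hxq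
    by_contra hne
    exact hr ⟨hq, x, hx, hne, hxq⟩

lemma exists_good_adj [IsDomain T] {D : Data T} {R : Subring T} (hG : Good D R) (hR : #R < 𝔠)
    (t w : T) (h0 : w ∉ D.Q0) (h : ∀ q ∈ Rel D R, w ∉ q) :
    ∃ z : ℂ, Good D (adj R (t + algebraMap ℂ T z * w)) ∧
      Trans R D.Q0 (t + algebraMap ℂ T z * w) ∧
      ∀ q ∈ Rel D R, Trans R q (t + algebraMap ℂ T z * w) := by
  have hc : #(Option (Rel D R)) < 𝔠 := by
    rw [Cardinal.mk_option]
    exact Cardinal.add_lt_of_lt Cardinal.aleph0_le_continuum (card_rel D hG hR)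
      (Cardinal.one_lt_aleph0.trans Cardinal.aleph0_lt_continuum)
  obtain ⟨z, hz⟩ := exists_trans R hR hc (fun o => o.elim D.Q0 (fun q => q.1))
    (by rintro (_ | q); exacts [D.q0prime, D.prime _ q.2.1]) (fun _ => t) (fun _ => w)
  have a1 := hz none h0
  have a2 : ∀ q ∈ Rel D R, Trans R q (t + algebraMap ℂ T z * w) :=
    fun q hq => hz (some ⟨q, hq⟩) (h q hq)
  exact ⟨z, good_adj hG a1 a2, a1, a2⟩

/-- small avoidance for a finitely generated ideal -/
lemma exists_mem_avoid (J : Ideal T) (hJ : J.FG) (S : Set (Ideal T)) (hS : #S < 𝔠)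
    (hp : ∀ q ∈ S, q.IsPrime) (hne : ∀ q ∈ S, ¬ J ≤ q) : ∃ w ∈ J, ∀ q ∈ S, w ∉ q := by
  classical
  obtain ⟨F, hF⟩ := hJ
  obtain ⟨l, rfl⟩ : ∃ l : List T, l.toFinset = F := ⟨F.toList, by simp⟩
  let f : T[X] := ∑ i ∈ Finset.range l.length, C (l.getD i 0) * X ^ i
  have hf : ∀ i, i < l.length → f.coeff i = l.getD i 0 := by
    intro i hi
    simp only [f, finset_sum_coeff, coeff_C_mul, coeff_X_pow, mul_ite, mul_one, mul_zero]
    rw [Finset.sum_ite_eq]; simp only [Finset.mem_range, hi, if_true]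
  have hcoef : ∀ q ∈ S, ∃ i, f.coeff i ∉ q := by
    intro q hq
    by_contra! hcon
    apply hne q hq
    rw [← hF, Submodule.span_le]
    intro x hx
    have hx' : x ∈ l := by simpa using hx
    obtain ⟨i, hi, rfl⟩ := List.getElem_of_mem hx'
    have := hcon i
    rw [hf i hi, List.getD_eq_getElem _ _ hi] at this
    exact this
  obtain ⟨z, hz⟩ := avoid hS (fun q => {z : ℂ | eval (algebraMap ℂ T z) f ∈ q.1}) (fun q =>
    have := hp q.1 q.2
    fin_bad q.1 f (hcoef q.1 q.2))
  refine ⟨eval (algebraMap ℂ T z) f, ?_, fun q hq => hz ⟨q, hq⟩⟩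
  simp only [f, eval_finset_sum, eval_mul, eval_C, eval_pow, eval_X]
  refine J.sum_mem fun i hi => J.mul_mem_right _ ?_
  rw [Finset.mem_range] at hi
  rw [← hF, List.getD_eq_getElem _ _ hi]
  exact Submodule.subset_span (by simp)

/-- adjoin an element of a coset of an ideal -/
lemma exists_good_coset [IsDomain T] {D : Data T} {R : Subring T} (hG : Good D R) (hR : #R < 𝔠)
    (J : Ideal T) (hJ : J.FG) (u : T) (h0 : ¬ J ≤ D.Q0) (h : ∀ q ∈ Rel D R, ¬ J ≤ q) :
    ∃ s, s - u ∈ J ∧ Good D (adj R s) ∧ s ∉ D.Q0 ∧ ∀ q ∈ Rel D R, s ∉ q := by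
  have hc : #(insert D.Q0 (Rel D R) : Set (Ideal T)) < 𝔠 :=
    (Cardinal.mk_insert_le).trans_lt (Cardinal.add_lt_of_lt Cardinal.aleph0_le_continuum
      (card_rel D hG hR) (Cardinal.one_lt_aleph0.trans Cardinal.aleph0_lt_continuum))
  obtain ⟨w, hw, hwq⟩ := exists_mem_avoid J hJ (insert D.Q0 (Rel D R)) hc
    (by rintro q (rfl | hq); exacts [D.q0prime, D.prime q hq.1])
    (by rintro q (rfl | hq); exacts [h0, h q hq])
  obtain ⟨z, hz, hz0, hzq⟩ := exists_good_adj hG hR u w (hwq _ (Set.mem_insert _ _))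
    (fun q hq => hwq q (Set.mem_insert_of_mem _ hq))
  have aux : ∀ (P : Ideal T), P.IsPrime → ∀ s, Trans R P s → s ∉ P := by
    intro P hP s hs hsP
    have := hs X (by simpa using hsP) 1
    rw [coeff_X_one] at this
    exact hP.ne_top ((Ideal.eq_top_iff_one P).2 this)
  refine ⟨_, ?_, hz, aux _ D.q0prime _ hz0, fun q hq => aux _ (D.prime q hq.1) _ (hzq q hq)⟩
  rw [add_sub_cancel_left]; exact J.mul_mem_left _ hw

/-- explicit linear combinations -/
def LC (S : Set T) : List T → T → Prop
  | [], c => c = 0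
  | a :: l, c => ∃ u ∈ S, ∃ c', LC S l c' ∧ c = u * a + c'

lemma one_step [IsDomain T] {D : Data T} {R : Subring T} (hG : Good D R) {a c t : T} (ha : a ∈ R)
    (hc : c ∈ R) (ha0 : a ≠ 0) (h : c = t * a) : Good D (adj R t) := by
  have ha' : a ∉ D.Q0 := fun h => ha0 (hG.1 a ha h)
  refine ⟨?_, fun q hq => ?_⟩
  · have := D.q0prime
    exact disjoint_denom hG.1 (denom_adj ⟨a, ha, ha', by rw [mul_comm, ← h]; exact hc⟩)
  · have hqp := D.prime q hq
    refine (hG.2 q hq).of_denom (le_adj _ _) (denom_adj ?_)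
    obtain ⟨r, hr, s, hs, e, hor⟩ := hG.2 q hq a ha c hc
    have e' : r = s * t := by
      apply mul_right_cancel₀ ha0; rw [e, h]; ring
    refine ⟨s, hs, ?_, by rw [← e']; exact hr⟩
    intro hsq
    rcases hor with h | h
    · exact h (by rw [e']; exact q.mul_mem_right _ hsq)
    · exact h hsq

lemma two_step_at [IsDomain T] {D : Data T} {R : Subring T} (hG : Good D R) {q : Ideal T}
    (hq : q ∈ D.Qs) {a1 a2 c s1 s2 r s : T} (h1 : a1 ∈ R) (hc : c ∈ R)
    (ha0 : a1 ≠ 0) (h : c = s1 * a1 + s2 * a2) (hr : r ∈ R) (hs : s ∈ R) (hrs : r * a2 = s * a1)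
    (hrq : r ∉ q) (ht : q ∈ Rel D R → Trans R q s2) : GoodAt (adj (adj R s2) s1) q := by
  have hqp := D.prime q hq
  have hG2 : GoodAt (adj R s2) q := by
    by_cases hr : q ∈ Rel D R
    · exact (hG.2 q hq).adj_trans (ht hr)
    · apply GoodAt.adj_of_disjoint
      intro x hx hxq
      by_contra hne
      exact hr ⟨hq, x, hx, hne, hxq⟩
  refine hG2.of_denom (le_adj _ _) (denom_adj ?_)
  obtain ⟨r', hr', s', hs', e, hor⟩ := hG.2 q hq c hc a1 h1
  have e2 : r * s' = r' * (r * s1 + s * s2) := by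
    apply mul_right_cancel₀ ha0
    linear_combination (-r) * e + r * r' * h + r' * s2 * hrs
  have hr'q : r' ∉ q := by
    intro hcon
    have : r * s' ∈ q := by rw [e2]; exact q.mul_mem_right _ hcon
    rcases hqp.mem_or_mem this with h | h
    · exact hrq h
    · tauto
  refine ⟨r * r', le_adj _ _ (mul_mem hr hr'), fun h => (hqp.mem_or_mem h).elim hrq hr'q, ?_⟩
  have e3 : r * r' * s1 = r * s' - r' * s * s2 := by linear_combination - e2
  rw [e3]
  exact sub_mem (le_adj _ _ (mul_mem hr hs')) (mul_mem (le_adj _ _ (mul_mem hr' hs)) (mem_adj _ _))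

lemma two_step [IsDomain T] {D : Data T} {R : Subring T} (hG : Good D R) (hR : #R < 𝔠)
    {a1 a2 c t1 t2 : T}
    (h1 : a1 ∈ R) (h2 : a2 ∈ R) (hc : c ∈ R) (ha1 : a1 ≠ 0) (ha2 : a2 ≠ 0)
    (h : c = t1 * a1 + t2 * a2) :
    ∃ s1 s2, c = s1 * a1 + s2 * a2 ∧ Good D (adj (adj R s2) s1) := by
  obtain ⟨α, β, hαβ, hα⟩ := D.cop a1 a2
  have hβ : ∀ r s, r * a2 = s * a1 → β ∣ s := by
    intro r s hrs
    obtain ⟨z, rfl⟩ := hα r s hrs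
    refine ⟨z, mul_right_cancel₀ ha1 ?_⟩
    linear_combination z * hαβ - hrs
  have hα0 : α ∉ D.Q0 := by
    intro hcon
    obtain ⟨z, hz⟩ := hα a1 a2 (mul_comm _ _)
    exact ha1 (hG.1 a1 h1 (by rw [hz]; exact D.Q0.mul_mem_right _ hcon))
  have hc' : #(Option (Rel D R) × Bool) < 𝔠 := by
    rw [Cardinal.mk_prod, Cardinal.lift_id, Cardinal.lift_id, Cardinal.mk_option]
    refine Cardinal.mul_lt_of_lt Cardinal.aleph0_le_continuum
      (Cardinal.add_lt_of_lt Cardinal.aleph0_le_continuum (card_rel D hG hR)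
      (Cardinal.one_lt_aleph0.trans Cardinal.aleph0_lt_continuum)) ?_
    exact (Cardinal.lt_aleph0_of_finite _).trans Cardinal.aleph0_lt_continuum
  obtain ⟨z, hz⟩ := exists_trans R hR hc' (fun o => o.1.elim D.Q0 (fun q => q.1))
    (by rintro ⟨_ | q, _⟩; exacts [D.q0prime, D.prime _ q.2.1])
    (fun o => if o.2 then t1 else t2) (fun o => if o.2 then β else -α)
  set s1 := t1 + algebraMap ℂ T z * β with hs1
  set s2 := t2 + algebraMap ℂ T z * (-α) with hs2
  have hcs : c = s1 * a1 + s2 * a2 := by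
    rw [h, hs1, hs2]; linear_combination (algebraMap ℂ T z) * hαβ
  have T0 : Trans R D.Q0 s2 := by
    have := hz (none, false) (by simpa using hα0)
    exact this
  have T2 : ∀ q ∈ Rel D R, α ∉ q → Trans R q s2 := by
    intro q hq hαq
    have := hz (some ⟨q, hq⟩, false) (by simpa using hαq)
    exact this
  have T1 : ∀ q ∈ Rel D R, β ∉ q → Trans R q s1 := by
    intro q hq hαq
    have := hz (some ⟨q, hq⟩, true) (by simpa using hαq)
    simpa using this
  have hcomm : adj (adj R s2) s1 = adj (adj R s1) s2 := by
    simp only [adj]; rw [sup_assoc, sup_assoc, sup_comm (Subring.closure {s2})]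
  refine ⟨s1, s2, hcs, ?_, fun q hq => ?_⟩
  · have := D.q0prime
    have ha' : a1 ∉ D.Q0 := fun h => ha1 (hG.1 a1 h1 h)
    refine disjoint_denom (disjoint_trans hG.1 T0) (denom_adj ⟨a1, le_adj _ _ h1, ha', ?_⟩)
    have : a1 * s1 = c - s2 * a2 := by rw [hcs]; ring
    rw [this]
    exact sub_mem (le_adj _ _ hc) (mul_mem (mem_adj _ _) (le_adj _ _ h2))
  · obtain ⟨r, hr, s, hs, e, hor⟩ := hG.2 q hq a2 h2 a1 h1
    by_cases hrq : r ∈ q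
    · have hsq : s ∉ q := by tauto
      rw [hcomm]
      refine two_step_at hG hq h2 hc ha2 (by rw [hcs]; ring) hs hr e.symm hsq fun hrel => T1 q hrel ?_
      intro hβq
      obtain ⟨y, hy⟩ := hβ r s e
      exact hsq (by rw [hy]; exact q.mul_mem_right _ hβq)
    · refine two_step_at hG hq h1 hc ha1 hcs hr hs e hrq fun hrel => T2 q hrel ?_
      intro hαq
      obtain ⟨y, hy⟩ := hα r s e
      exact hrq (by rw [hy]; exact q.mul_mem_right _ hαq)

lemma exists_shift {D : Data T} {R : Subring T} (hG : Good D R) {a1 a2 a3 : T}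
    (h1 : a1 ∈ R) (h2 : a2 ∈ R) (h3 : a3 ∈ R) (ha1 : a1 ≠ 0) :
    ∃ μ : ℕ, ∀ q ∈ D.Qs, a1 ∈ q → ∃ r s, r ∉ q ∧ r * a3 = s * (a2 + μ * a3) := by
  have ha' : a1 ∉ D.Q0 := fun h => ha1 (hG.1 a1 h1 h)
  have hfin := D.fin a1 ha'
  let B : Ideal T → Set ℕ := fun q => {μ | ¬ ∃ r s, r ∉ q ∧ r * a3 = s * (a2 + μ * a3)}
  have hB : ∀ q ∈ {q ∈ D.Qs | a1 ∈ q}, (B q).Finite := by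
    rintro q ⟨hq, -⟩
    have hqp := D.prime q hq
    obtain ⟨r, hr, s, hs, e, hor⟩ := hG.2 q hq a2 h2 a3 h3
    have hmem : ∀ μ ∈ B q, s + μ * r ∈ q := by
      intro μ hμ
      by_contra hcon
      exact hμ ⟨s + μ * r, r, hcon, by linear_combination - e⟩
    apply Set.Subsingleton.finite
    intro μ hμ ν hν
    by_contra hne
    have k1 := q.sub_mem (hmem μ hμ) (hmem ν hν)
    have k2 : (algebraMap ℂ T ((μ : ℂ) - ν)) * r ∈ q := by
      have : (algebraMap ℂ T ((μ : ℂ) - ν)) * r = (s + μ * r) - (s + ν * r) := by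
        simp; ring
      rw [this]; exact k1
    have hu : IsUnit (algebraMap ℂ T ((μ : ℂ) - ν)) := by
      apply IsUnit.map
      rw [isUnit_iff_ne_zero, sub_ne_zero]
      exact_mod_cast hne
    have hrq : r ∈ q := by
      rcases hqp.mem_or_mem k2 with h | h
      · exact absurd (Ideal.eq_top_of_isUnit_mem q h hu) hqp.ne_top
      · exact h
    have hsq : s ∈ q := by
      have := q.sub_mem (hmem μ hμ) (q.mul_mem_left (μ : T) hrq)
      simpa using this
    tauto
  have hU : (⋃ q ∈ {q ∈ D.Qs | a1 ∈ q}, B q).Finite := hfin.biUnion hB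
  obtain ⟨μ, hμ⟩ := hU.exists_notMem
  refine ⟨μ, fun q hq haq => ?_⟩
  by_contra hcon
  exact hμ (Set.mem_biUnion (show q ∈ {q ∈ D.Qs | a1 ∈ q} from ⟨hq, haq⟩) hcon)

lemma lc_step [IsDomain T] (D : Data T) : ∀ (n : ℕ) (l : List T), l.length ≤ n → ∀ (R : Subring T),
    Good D R → #R < 𝔠 → (∀ x ∈ l, x ∈ R) → ∀ c ∈ R, LC Set.univ l c →
    ∃ R', Ext R R' ∧ Good D R' ∧ LC (R' : Set T) l c := by
  intro n
  induction n with
  | zero =>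
    intro l hl R hG hR hlR c hc h
    have : l = [] := List.length_eq_zero_iff.1 (by omega)
    subst this
    exact ⟨R, Relation.ReflTransGen.refl, hG, h⟩
  | succ n ih =>
    intro l hl R hG hR hlR c hc h
    match l, hl, hlR, h with
    | [], _, _, h => exact ⟨R, Relation.ReflTransGen.refl, hG, h⟩
    | a1 :: l1, hl, hlR, h =>
      by_cases ha1 : a1 = 0
      · subst ha1
        obtain ⟨u, -, c', hc', e⟩ := h
        have e' : c = c' := by rw [e]; ring
        subst e'
        obtain ⟨R', h1, h2, h3⟩ := ih l1 (by simpa using hl) R hG hR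
          (fun x hx => hlR x (List.mem_cons_of_mem _ hx)) c hc hc'
        exact ⟨R', h1, h2, 0, zero_mem R', c, h3, by ring⟩
      have h1R : a1 ∈ R := hlR a1 (by simp)
      match l1, hl, hlR, h with
      | [], _, _, h =>
        obtain ⟨u, -, c', hc', e⟩ := h
        have hc0 : c' = 0 := hc'
        rw [hc0, add_zero] at e
        exact ⟨adj R u, Ext.adj R u, one_step hG h1R hc ha1 e, u, mem_adj R u, 0, rfl, by
          rw [e, add_zero]⟩
      | [a2], hl, hlR, h =>
        obtain ⟨u, -, c', ⟨u2, -, c'', hc'', e2⟩, e⟩ := h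
        have hc0 : c'' = 0 := hc''
        rw [hc0, add_zero] at e2
        rw [e2] at e
        by_cases ha2 : a2 = 0
        · rw [ha2, mul_zero, add_zero] at e
          exact ⟨adj R u, Ext.adj R u, one_step hG h1R hc ha1 e, u, mem_adj R u, 0,
            ⟨0, zero_mem (adj R u), 0, rfl, by ring⟩, by rw [e, add_zero]⟩
        obtain ⟨s1, s2, es, hg⟩ := two_step hG hR h1R (hlR a2 (by simp)) hc ha1 ha2 e
        refine ⟨_, (Ext.adj R s2).trans (Ext.adj _ s1), hg, s1, mem_adj _ _, s2 * a2,
          ⟨s2, le_adj _ _ (mem_adj _ _), 0, rfl, by ring⟩, es⟩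
      | a2 :: a3 :: l', hl, hlR, h =>
        obtain ⟨u1, -, c', ⟨u2, -, c'', ⟨u3, -, c3, hc3, e3⟩, e2⟩, e1⟩ := h
        have h2R : a2 ∈ R := hlR a2 (by simp)
        have h3R : a3 ∈ R := hlR a3 (by simp)
        obtain ⟨μ, hμ⟩ := exists_shift hG h1R h2R h3R ha1
        obtain ⟨α1, β1, hαβ1, hα1⟩ := D.cop a1 a3
        obtain ⟨α2, β2, hαβ2, hα2⟩ := D.cop (a2 + μ * a3) a3
        have hα1d : α1 ∣ a1 := hα1 a1 a3 (mul_comm _ _)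
        have hnot : ∀ q : Ideal T, a1 ∉ q → α1 ∉ q := by
          intro q hq hcon
          obtain ⟨y, hy⟩ := hα1d
          exact hq (by rw [hy]; exact q.mul_mem_right _ hcon)
        have ha1' : a1 ∉ D.Q0 := fun h => ha1 (hG.1 a1 h1R h)
        have hcard : #(insert D.Q0 (Rel D R) : Set (Ideal T)) < 𝔠 :=
          (Cardinal.mk_insert_le).trans_lt (Cardinal.add_lt_of_lt Cardinal.aleph0_le_continuum
            (card_rel D hG hR) (Cardinal.one_lt_aleph0.trans Cardinal.aleph0_lt_continuum))
        obtain ⟨ν, hν⟩ := avoid hcard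
          (fun q => {z : ℂ | eval (algebraMap ℂ T z) (C α1 + C α2 * X) ∈ q.1}) (by
            rintro ⟨q, hq⟩
            have hqp : q.IsPrime := by
              rcases hq with rfl | hq
              exacts [D.q0prime, D.prime q hq.1]
            apply fin_bad
            by_cases haq : a1 ∈ q
            · refine ⟨1, ?_⟩
              rcases hq with rfl | hq
              · exact absurd haq ha1'
              obtain ⟨r, s, hrq, hrs⟩ := hμ q hq.1 haq
              obtain ⟨y, hy⟩ := hα2 r s hrs
              have : (C α1 + C α2 * X).coeff 1 = α2 := by simp [coeff_C]
              rw [this]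
              intro hcon
              exact hrq (by rw [hy]; exact q.mul_mem_right _ hcon)
            · refine ⟨0, ?_⟩
              simpa using hnot q haq)
        set w := α1 + α2 * algebraMap ℂ T ν with hw
        have hwq : ∀ q ∈ insert D.Q0 (Rel D R), w ∉ q := by
          intro q hq
          have := hν ⟨q, hq⟩
          simpa using this
        obtain ⟨z, hz, -, -⟩ := exists_good_adj hG hR (u3 - μ * u2) w
          (hwq _ (Set.mem_insert _ _)) (fun q hq => hwq q (Set.mem_insert_of_mem _ hq))
        set s := u3 - μ * u2 + algebraMap ℂ T z * w with hs
        have hμR : (μ : T) ∈ R := natCast_mem R μ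
        obtain ⟨R2, hE, hG2, v1, hv1, d1, ⟨v2, hv2, d2, hd2, ed1⟩, ed⟩ := ih
          (a1 :: (a2 + μ * a3) :: l') (by simp at hl ⊢; omega) (adj R s) hz (small_adj hR s)
          (by
            intro x hx
            simp only [List.mem_cons] at hx
            rcases hx with rfl | rfl | hx
            · exact le_adj _ _ h1R
            · exact le_adj _ _ (add_mem h2R (mul_mem hμR h3R))
            · exact le_adj _ _ (hlR x (by simp [hx])))
          (c - s * a3) (sub_mem (le_adj _ _ hc) (mul_mem (mem_adj _ _) (le_adj _ _ h3R)))
          ⟨u1 - algebraMap ℂ T z * β1, trivial, _,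
            ⟨u2 - algebraMap ℂ T z * algebraMap ℂ T ν * β2, trivial, c3, hc3, rfl⟩, by
              rw [e1, e2, e3, hs, hw]
              linear_combination (- algebraMap ℂ T z) * hαβ1
                - (algebraMap ℂ T z * algebraMap ℂ T ν) * hαβ2⟩
        refine ⟨R2, (Ext.adj R s).trans hE, hG2, v1, hv1, _, ⟨v2, hv2, _,
          ⟨s + v2 * μ, ?_, d2, hd2, rfl⟩, rfl⟩, ?_⟩
        · exact add_mem (hE.le (mem_adj _ _)) (mul_mem hv2 (natCast_mem R2 μ))
        · rw [ed1] at ed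
          linear_combination ed

end
end LUFD

end P2part

section P3part
open Polynomial Cardinal
namespace LUFD

section
variable {T : Type} [CommRing T] [Algebra ℂ T]

lemma LC.mono {S S' : Set T} (h : S ⊆ S') : ∀ (l : List T) (c : T), LC S l c → LC S' l c
  | [], _, hc => hc
  | _ :: l, _, ⟨u, hu, c', hc', e⟩ => ⟨u, h hu, c', LC.mono h l c' hc', e⟩

/-- the ideal generated by a list -/
def lspan (l : List T) : Ideal T := Ideal.span {x | x ∈ l}

lemma lspan_fg (l : List T) : (lspan l).FG := by
  classical
  exact ⟨l.toFinset, by simp [lspan]⟩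

lemma Ext.trans {R R' R'' : Subring T} (h : Ext R R') (h' : Ext R' R'') : Ext R R'' :=
  Relation.ReflTransGen.trans h h'

/-- the tasks -/
structure Done (D : Data T) (J : Ideal T) (l : List T) (c : T) (R R' : Subring T) : Prop where
  ta : ∃ s ∈ R', s - c ∈ J
  tb : (∀ x ∈ l, x ∈ R) → c ∈ R → LC Set.univ l c → LC (R' : Set T) l c
  tc : ¬ lspan l ≤ D.Q0 → (∀ q ∈ D.Qs, lspan l ≤ q → lspan l = q) → ∃ s ∈ R', s ≠ 0 ∧ s ∈ lspan l
  td : ¬ lspan l ≤ D.Q0 → (∀ q ∈ D.Qs, ¬ lspan l ≤ q) → c ∈ R → c ≠ 0 →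
    ∃ s ∈ R', s ∈ lspan l ∧ ∀ q ∈ D.Qs, c ∈ q → s ∉ q

lemma done_step [IsDomain T] (D : Data T) (J : Ideal T) (hJ : J.FG) (hJ0 : ¬ J ≤ D.Q0)
    (hJq : ∀ q ∈ D.Qs, ¬ J ≤ q) (l : List T) (c : T) (R : Subring T) (hG : Good D R)
    (hR : #R < 𝔠) :
    ∃ R', Ext R R' ∧ Good D R' ∧ Done D J l c R R' := by
  obtain ⟨s, hs, hG1, -, -⟩ := exists_good_coset hG hR J hJ c hJ0 fun q hq => hJq q hq.1
  have E1 := Ext.adj R s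
  have h1 := E1.small hR
  obtain ⟨R2, E2, hG2, hb⟩ : ∃ R2, Ext (adj R s) R2 ∧ Good D R2 ∧
      ((∀ x ∈ l, x ∈ R) → c ∈ R → LC Set.univ l c → LC (R2 : Set T) l c) := by
    by_cases hc : (∀ x ∈ l, x ∈ R) ∧ c ∈ R ∧ LC Set.univ l c
    · obtain ⟨R2, h1, h2, h3⟩ := lc_step D l.length l le_rfl (adj R s) hG1 h1
        (fun x hx => le_adj _ _ (hc.1 x hx)) c (le_adj _ _ hc.2.1) hc.2.2
      exact ⟨R2, h1, h2, fun _ _ _ => h3⟩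
    · exact ⟨_, Relation.ReflTransGen.refl, hG1, fun a b c => absurd ⟨a, b, c⟩ hc⟩
  have h2 := E2.small h1
  obtain ⟨R3, E3, hG3, hc⟩ : ∃ R3, Ext R2 R3 ∧ Good D R3 ∧
      (¬ lspan l ≤ D.Q0 → (∀ q ∈ D.Qs, lspan l ≤ q → lspan l = q) →
        ∃ s ∈ R3, s ≠ 0 ∧ s ∈ lspan l) := by
    by_cases hc : (¬ lspan l ≤ D.Q0) ∧ (∀ q ∈ D.Qs, lspan l ≤ q → lspan l = q)
    · by_cases hex : ∃ s ∈ R2, s ≠ 0 ∧ s ∈ lspan l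
      · exact ⟨R2, Relation.ReflTransGen.refl, hG2, fun _ _ => hex⟩
      · obtain ⟨s, hs, hg, hs0, -⟩ := exists_good_coset hG2 h2 (lspan l) (lspan_fg l) 0 hc.1
          (by
            rintro q ⟨hq, x, hx, hx0, hxq⟩ hle
            exact hex ⟨x, hx, hx0, by rw [hc.2 q hq hle]; exact hxq⟩)
        exact ⟨_, Ext.adj R2 s, hg, fun _ _ => ⟨s, mem_adj _ _,
          fun h => hs0 (h ▸ D.Q0.zero_mem), by simpa using hs⟩⟩
    · exact ⟨_, Relation.ReflTransGen.refl, hG2, fun a b => absurd ⟨a, b⟩ hc⟩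
  have h3 := E3.small h2
  have h03 : R ≤ R3 := (E1.trans (E2.trans E3)).le
  obtain ⟨R4, E4, hG4, hd⟩ : ∃ R4, Ext R3 R4 ∧ Good D R4 ∧
      (¬ lspan l ≤ D.Q0 → (∀ q ∈ D.Qs, ¬ lspan l ≤ q) → c ∈ R → c ≠ 0 →
        ∃ s ∈ R4, s ∈ lspan l ∧ ∀ q ∈ D.Qs, c ∈ q → s ∉ q) := by
    by_cases hc : (¬ lspan l ≤ D.Q0) ∧ (∀ q ∈ D.Qs, ¬ lspan l ≤ q)
    · obtain ⟨s, hs, hg, hs0, hsq⟩ := exists_good_coset hG3 h3 (lspan l) (lspan_fg l) 0 hc.1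
        fun q hq => hc.2 q hq.1
      exact ⟨_, Ext.adj R3 s, hg, fun _ _ hcR hc0 => ⟨s, mem_adj _ _, by simpa using hs,
        fun q hq hcq => hsq q ⟨hq, c, h03 hcR, hc0, hcq⟩⟩⟩
    · exact ⟨_, Relation.ReflTransGen.refl, hG3, fun a b => absurd ⟨a, b⟩ hc⟩
  refine ⟨R4, E1.trans (E2.trans (E3.trans E4)), hG4, ⟨s, ?_, hs⟩, ?_, ?_, hd⟩
  · exact (E2.trans (E3.trans E4)).le (mem_adj _ _)
  · exact fun a b c => LC.mono (E3.trans E4).le _ _ (hb a b c)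
  · intro a b
    obtain ⟨s, hs, h⟩ := hc a b
    exact ⟨s, E4.le hs, h⟩

lemma good_bot [IsDomain T] (D : Data T) : Good D (⊥ : Subring T) := by
  have key : ∀ P : Ideal T, P.IsPrime → ∀ x ∈ (⊥ : Subring T), x ∈ P → x = 0 := by
    intro P hP x hx hxP
    obtain ⟨k, rfl⟩ := Subring.mem_bot.1 hx
    by_contra hne
    have hk : k ≠ 0 := by rintro rfl; simp at hne
    have hu : IsUnit (algebraMap ℂ T (k : ℂ)) := by
      apply IsUnit.map
      rw [isUnit_iff_ne_zero]; exact_mod_cast hk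
    rw [map_intCast] at hu
    exact hP.ne_top (Ideal.eq_top_of_isUnit_mem P hxP hu)
  refine ⟨key _ D.q0prime, fun q hq a ha b hb => ?_⟩
  have hqp := D.prime q hq
  by_cases h : a = 0 ∧ b = 0
  · exact ⟨1, one_mem _, 1, one_mem _, by rw [h.1, h.2], Or.inl fun h =>
      hqp.ne_top ((Ideal.eq_top_iff_one _).2 h)⟩
  · refine ⟨b, hb, a, ha, mul_comm _ _, ?_⟩
    by_contra! hcon
    exact h ⟨key q hqp a ha hcon.2, key q hqp b hb hcon.1⟩

lemma good_iSup (D : Data T) {ι : Type} [Nonempty ι] (S : ι → Subring T)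
    (hS : Directed (· ≤ ·) S) (h : ∀ i, Good D (S i)) : Good D (⨆ i, S i) := by
  refine ⟨fun x hx hx0 => ?_, fun q hq a ha b hb => ?_⟩
  · obtain ⟨i, hi⟩ := (Subring.mem_iSup_of_directed hS).1 hx
    exact (h i).1 x hi hx0
  · obtain ⟨i, hi⟩ := (Subring.mem_iSup_of_directed hS).1 ha
    obtain ⟨j, hj⟩ := (Subring.mem_iSup_of_directed hS).1 hb
    obtain ⟨k, hik, hjk⟩ := hS i j
    obtain ⟨r, hr, s, hs, e⟩ := (h k).2 q hq a (hik hi) b (hjk hj)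
    exact ⟨r, le_iSup S k hr, s, le_iSup S k hs, e⟩

lemma card_closure (F : Set T) (hF : #F < 𝔠) : #(Subring.closure F) < 𝔠 := by
  have h1 := Algebra.cardinalMk_adjoin_le ℤ F
  have : (Subring.closure F : Set T) = (Algebra.adjoin ℤ F : Set T) := by
    rw [Algebra.adjoin_int]; rfl
  have h2 : #(Subring.closure F) = #(Algebra.adjoin ℤ F) := by
    change #((Subring.closure F : Set T)) = #((Algebra.adjoin ℤ F : Set T))
    rw [this]
  rw [h2]
  refine h1.trans_lt ?_
  simp only [Cardinal.mk_int, max_lt_iff]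
  simp [hF, Cardinal.aleph0_lt_continuum]

lemma exists_A_aux [IsDomain T] (D : Data T) (J : Ideal T) (hJ : J.FG) (hJ0 : ¬ J ≤ D.Q0)
    (hJq : ∀ q ∈ D.Qs, ¬ J ≤ q) (W : Type) [LinearOrder W] [WellFoundedLT W] [Nonempty W]
    (hW : ∀ a : W, #(Set.Iio a) < 𝔠) (e : W → List T × T)
    (he : ∀ x b, ∃ a, b < a ∧ e a = x) :
    ∃ A : Subring T, Good D A ∧ ∀ l c, Done D J l c A A := by
  classical
  have step : ∀ (x : List T × T) (R : Subring T), Good D R → #R < 𝔠 → ∃ F : Set T, F.Finite ∧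
      Good D (R ⊔ Subring.closure F) ∧ Done D J x.1 x.2 R (R ⊔ Subring.closure F) := by
    intro x R hG hR
    obtain ⟨R', hE, h1, h2⟩ := done_step D J hJ hJ0 hJq x.1 x.2 R hG hR
    obtain ⟨F, hF, rfl⟩ := hE.finite
    exact ⟨F, hF, h1, h2⟩
  let pick : (List T × T) → Subring T → Set T := fun x R =>
    if h : Good D R ∧ #R < 𝔠 then (step x R h.1 h.2).choose else ∅
  have pick_spec : ∀ x R, Good D R → #R < 𝔠 → 
      Good D (R ⊔ Subring.closure (pick x R)) ∧
        Done D J x.1 x.2 R (R ⊔ Subring.closure (pick x R)) := by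
    intro x R h1 h2
    simp only [pick, dif_pos (And.intro h1 h2)]
    exact (step x R h1 h2).choose_spec.2
  have pick_fin : ∀ x R, (pick x R).Finite := by
    intro x R
    by_cases h : Good D R ∧ #R < 𝔠
    · simp only [pick, dif_pos h]
      exact (step x R h.1 h.2).choose_spec.1
    · simp only [pick, dif_neg h]
      exact Set.finite_empty
  let F : W → Set T := wellFounded_lt.fix fun a rec =>
    pick (e a) (Subring.closure (⋃ b : Set.Iio a, rec b.1 b.2))
  let S : W → Subring T := fun a => Subring.closure (⋃ b : Set.Iio a, F b.1)
  have hF : ∀ a, F a = pick (e a) (S a) := fun a => wellFounded_lt.fix_eq _ a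
  let S' : W → Subring T := fun a => S a ⊔ Subring.closure (F a)
  have hSlt : ∀ a b, a < b → S' a ≤ S b := by
    intro a b hab
    refine sup_le (Subring.closure_mono ?_) (Subring.closure_mono ?_)
    · refine Set.iUnion_subset fun c => ?_
      exact Set.subset_iUnion (fun x : Set.Iio b => F x.1) ⟨c.1, c.2.trans hab⟩
    · exact Set.subset_iUnion (fun x : Set.Iio b => F x.1) ⟨a, hab⟩
  have hS'mono : Monotone S' := by
    intro a b hab
    rcases hab.eq_or_lt with rfl | h
    · exact le_rfl
    · exact (hSlt a b h).trans le_sup_left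
  have hsmall : ∀ a, #(S a) < 𝔠 := by
    intro a
    apply card_closure
    refine (Cardinal.mk_iUnion_le_sum_mk).trans_lt ?_
    calc Cardinal.sum (fun b : Set.Iio a => #(F b.1))
        ≤ Cardinal.sum (fun _ : Set.Iio a => ℵ₀) :=
          Cardinal.sum_le_sum _ _ fun b => by
            rw [hF]
            exact ((pick_fin _ _).lt_aleph0).le
      _ = #(Set.Iio a) * ℵ₀ := by simp
      _ < 𝔠 := Cardinal.mul_lt_of_lt Cardinal.aleph0_le_continuum (hW a)
        Cardinal.aleph0_lt_continuum
  have hgood : ∀ a, Good D (S a) := by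
    intro a
    induction a using WellFoundedLT.induction with
    | ind a ih =>
      have h' : ∀ b : Set.Iio a, Good D (S' b.1) := by
        intro b
        have := (pick_spec (e b.1) (S b.1) (ih b.1 b.2) (hsmall b.1)).1
        rw [← hF] at this
        exact this
      rcases isEmpty_or_nonempty (Set.Iio a) with hE | hE
      · have : S a = ⊥ := by
          change Subring.closure (⋃ b : Set.Iio a, F b.1) = ⊥
          rw [Set.iUnion_of_empty, Subring.closure_empty]
        rw [this]; exact good_bot D
      · have : S a = ⨆ b : Set.Iio a, S' b.1 := by
          apply le_antisymm
          · refine (Subring.closure_le).2 (Set.iUnion_subset fun b => ?_)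
            refine Set.Subset.trans ?_ (le_iSup (fun b : Set.Iio a => S' b.1) b)
            exact Set.Subset.trans Subring.subset_closure
              (le_sup_right : Subring.closure (F b.1) ≤ S' b.1)
          · exact iSup_le fun b => hSlt _ _ b.2
        rw [this]
        exact good_iSup D _ (Monotone.directed_le fun b c h => hS'mono h) h'
  have hgood' : ∀ a, Good D (S' a) ∧ Done D J (e a).1 (e a).2 (S a) (S' a) := by
    intro a
    have := pick_spec (e a) (S a) (hgood a) (hsmall a)
    rw [← hF] at this
    exact this
  have hdir : Directed (· ≤ ·) S' := hS'mono.directed_le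
  refine ⟨⨆ a, S' a, good_iSup D S' hdir fun a => (hgood' a).1, fun l c => ?_⟩
  have hle : ∀ a, S' a ≤ ⨆ a, S' a := le_iSup S'
  have hmem : ∀ {x}, x ∈ ⨆ a, S' a → ∃ a, x ∈ S' a := fun h =>
    (Subring.mem_iSup_of_directed hdir).1 h
  have hlist : ∀ l : List T, (∀ x ∈ l, x ∈ ⨆ a, S' a) → ∃ a, ∀ x ∈ l, x ∈ S' a := by
    intro l
    induction l with
    | nil => intro _; exact ⟨Classical.arbitrary W, by simp⟩
    | cons y l ih =>
      intro h
      obtain ⟨a, ha⟩ := ih fun x hx => h x (by simp [hx])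
      obtain ⟨b, hb⟩ := hmem (h y (by simp))
      refine ⟨max a b, fun x hx => ?_⟩
      rcases List.mem_cons.1 hx with rfl | hx
      · exact hS'mono (le_max_right _ _) hb
      · exact hS'mono (le_max_left _ _) (ha x hx)
  constructor
  · obtain ⟨a, -, ha⟩ := he (l, c) (Classical.arbitrary W)
    have := (hgood' a).2.ta
    rw [ha] at this
    obtain ⟨s, hs, h⟩ := this
    exact ⟨s, hle a hs, h⟩
  · intro h1 h2 h3
    obtain ⟨b, hb⟩ := hlist (c :: l) (by
      intro x hx
      rcases List.mem_cons.1 hx with rfl | hx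
      exacts [h2, h1 x hx])
    obtain ⟨a, hab, ha⟩ := he (l, c) b
    have := (hgood' a).2.tb
    rw [ha] at this
    exact LC.mono (hle a) _ _ (this (fun x hx => hSlt _ _ hab (hb x (by simp [hx])))
      (hSlt _ _ hab (hb c (by simp))) h3)
  · intro h1 h2
    obtain ⟨a, -, ha⟩ := he (l, c) (Classical.arbitrary W)
    have := (hgood' a).2.tc
    rw [ha] at this
    obtain ⟨s, hs, h⟩ := this h1 h2
    exact ⟨s, hle a hs, h⟩
  · intro h1 h2 h3 h4
    obtain ⟨b, hb⟩ := hmem h3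
    obtain ⟨a, hab, ha⟩ := he (l, c) b
    have := (hgood' a).2.td
    rw [ha] at this
    obtain ⟨s, hs, h⟩ := this h1 h2 (hSlt _ _ hab hb) h4
    exact ⟨s, hle a hs, h⟩

theorem exists_A [IsDomain T] (hT : #T ≤ 𝔠) (D : Data T) (J : Ideal T) (hJ : J.FG)
    (hJ0 : ¬ J ≤ D.Q0) (hJq : ∀ q ∈ D.Qs, ¬ J ≤ q) :
    ∃ A : Subring T, Good D A ∧ ∀ l c, Done D J l c A A := by
  obtain ⟨_, _, hord⟩ := Cardinal.exists_ord_eq_type_lt ℂ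
  have hI : ∀ a : ℂ, #(Set.Iio a) < 𝔠 := by
    intro a
    have := Cardinal.mk_Iio_lt a hord
    rwa [Cardinal.mk_complex] at this
  have hcard : #((List T × T) × ℂ) ≤ #ℂ := by
    have h2 := Cardinal.mk_list_eq_max_mk_aleph0 T
    simp only [Cardinal.mk_prod, Cardinal.lift_id, Cardinal.mk_complex, h2]
    refine Cardinal.mul_le_of_le Cardinal.aleph0_le_continuum
      (Cardinal.mul_le_of_le Cardinal.aleph0_le_continuum 
      (max_le hT Cardinal.aleph0_le_continuum) hT) le_rfl
  obtain ⟨f⟩ := Cardinal.le_def _ _ |>.1 hcard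
  have hg : Function.Surjective (Function.invFun f) := Function.invFun_surjective f.injective
  refine exists_A_aux D J hJ hJ0 hJq ℂ hI (fun a => (Function.invFun f a).1) ?_
  intro x b
  by_contra! hcon
  have hsub : ∀ z : ℂ, f (x, z) ∈ Set.Iio b ∪ {b} := by
    intro z
    by_contra hz
    simp only [Set.mem_union, Set.mem_Iio, Set.mem_singleton_iff, not_or, not_lt] at hz
    refine hcon (f (x, z)) (lt_of_le_of_ne hz.1 (Ne.symm hz.2)) ?_
    rw [Function.leftInverse_invFun f.injective]
  have h1 : #ℂ ≤ #(Set.Iio b ∪ {b} : Set ℂ) :=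
    Cardinal.mk_le_of_injective (f := fun z => ⟨f (x, z), hsub z⟩) (by
      intro z w h
      have := f.injective (Subtype.ext_iff.1 h)
      exact (Prod.ext_iff.1 this).2)
  have h2 := h1.trans (Cardinal.mk_union_le _ _)
  have h3 : #(Set.Iio b) + #({b} : Set ℂ) < 𝔠 := Cardinal.add_lt_of_lt
    Cardinal.aleph0_le_continuum (hI b) (by
      rw [Cardinal.mk_singleton]; exact Cardinal.one_lt_aleph0.trans Cardinal.aleph0_lt_continuum)
  rw [Cardinal.mk_complex] at h2
  exact absurd h3 (not_lt.2 h2)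

end
end LUFD

end P3part

section P4part
open Polynomial Cardinal IsLocalRing
namespace LUFD

section
variable {T : Type} [CommRing T]

/-- finitely generated ideals are contracted -/
def Contr (A : Subring T) : Prop := ∀ l c, (∀ x ∈ l, x ∈ A) → c ∈ A → LC (Set.univ : Set T) l c →
  LC (A : Set T) l c

lemma lc_of_mem (l : List T) : ∀ c ∈ lspan l, LC Set.univ l c := by
  induction l with
  | nil => 
    intro c hc
    have : c = 0 := by simpa [lspan] using hc
    exact this
  | cons a l ih =>
    intro c hc
    have : lspan (a :: l) = Ideal.span {a} ⊔ lspan l := by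
      rw [lspan, lspan, ← Ideal.span_union]; congr 1; ext x; simp
    rw [this] at hc
    obtain ⟨y, hy, z, hz, rfl⟩ := Submodule.mem_sup.1 hc
    obtain ⟨u, rfl⟩ := Ideal.mem_span_singleton'.1 hy
    exact ⟨u, trivial, z, ih z hz, rfl⟩

lemma mem_of_lc (A : Subring T) (I : Ideal A) : ∀ (l : List A), (∀ x ∈ l, x ∈ I) → ∀ c : T,
    LC (A : Set T) (l.map Subtype.val) c → ∃ h : c ∈ A, (⟨c, h⟩ : A) ∈ I := by
  intro l
  induction l with
  | nil =>
    intro _ c hc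
    have : c = 0 := hc
    subst this
    exact ⟨zero_mem A, I.zero_mem⟩
  | cons a l ih =>
    rintro hl c ⟨u, hu, c', hc', rfl⟩
    obtain ⟨h, hI⟩ := ih (fun x hx => hl x (by simp [hx])) c' hc'
    refine ⟨add_mem (mul_mem hu a.2) h, ?_⟩
    exact I.add_mem (I.mul_mem_left ⟨u, hu⟩ (hl a (by simp))) hI

lemma contr_fg {A : Subring T} (hA : Contr A) (I : Ideal A) (hI : I.FG) {a : A}
    (ha : (a : T) ∈ I.map (algebraMap A T)) : a ∈ I := by
  obtain ⟨F, rfl⟩ := hI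
  have h1 : (Ideal.span (F : Set A)).map (algebraMap A T) = lspan (F.toList.map Subtype.val) := by
    rw [Ideal.map_span, lspan]
    congr 1
    ext x
    constructor
    · rintro ⟨y, hy, rfl⟩
      exact List.mem_map.2 ⟨y, by simpa using hy, rfl⟩
    · intro hx
      obtain ⟨y, hy, rfl⟩ := List.mem_map.1 hx
      exact ⟨y, by simpa using hy, rfl⟩
  rw [h1] at ha
  have h2 := hA _ _ (by
    intro x hx
    obtain ⟨y, -, rfl⟩ := List.mem_map.1 hx
    exact y.2) a.2 (lc_of_mem _ _ ha)
  obtain ⟨_, h⟩ := mem_of_lc A (Ideal.span (F : Set A)) F.toList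
    (fun x hx => Ideal.subset_span (by simpa using hx)) _ h2
  exact h

lemma noeth {A : Subring T} (hA : Contr A) [IsNoetherianRing T] : IsNoetherianRing A := by
  classical
  rw [isNoetherianRing_iff_ideal_fg]
  intro I
  have h1 : (I.map (algebraMap A T)).FG := (isNoetherianRing_iff_ideal_fg T).1 inferInstance _
  obtain ⟨F, hF, he⟩ := (Submodule.fg_span_iff_fg_span_finset_subset _).1 h1
  obtain ⟨G, hG, hGF⟩ := Finset.subset_set_image_iff.1 hF
  have h2 : I = Ideal.span (G : Set A) := by
    apply le_antisymm
    · intro a ha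
      refine contr_fg hA _ ⟨G, rfl⟩ ?_
      rw [Ideal.map_span]
      have : (a : T) ∈ Submodule.span T (algebraMap A T '' I) :=
        Submodule.subset_span ⟨a, ha, rfl⟩
      rw [he, ← hGF] at this
      simpa using this
    · exact Ideal.span_le.2 hG
  exact ⟨G, h2.symm⟩

lemma contr {A : Subring T} (hA : Contr A) [IsNoetherianRing T] (I : Ideal A) {a : A}
    (ha : (a : T) ∈ I.map (algebraMap A T)) : a ∈ I := by
  have := noeth hA
  exact contr_fg hA I ((isNoetherianRing_iff_ideal_fg A).1 this I) ha

lemma dvd_of_dvd {A : Subring T} (hA : Contr A) {a b : A} (h : (a : T) ∣ b) : a ∣ b := by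
  rw [← Ideal.mem_span_singleton]
  apply contr_fg hA _ ⟨{a}, by simp⟩
  rw [Ideal.map_span, Set.image_singleton]
  exact Ideal.mem_span_singleton.2 h

lemma localHom {A : Subring T} (hA : Contr A) : IsLocalHom (algebraMap A T) := by
  refine ⟨fun a ha => ?_⟩
  rw [isUnit_iff_dvd_one] at ha ⊢
  exact dvd_of_dvd hA ha

lemma isLocal {A : Subring T} (hA : Contr A) [IsLocalRing T] : IsLocalRing A := by
  have := localHom hA
  exact RingHom.domain_isLocalRing (algebraMap A T)

variable [IsLocalRing T] [IsNoetherianRing T]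

lemma map_max {A : Subring T} (h2 : ∀ c : T, ∃ s ∈ A, s - c ∈ maximalIdeal T ^ 2)
    [IsLocalRing A] [IsLocalHom (algebraMap A T)] :
    (maximalIdeal A).map (algebraMap A T) = maximalIdeal T := by
  apply le_antisymm
  · exact ((local_hom_TFAE (algebraMap A T)).out 0 2).1 ‹_›
  · refine Submodule.le_of_le_smul_of_le_jacobson_bot (I := maximalIdeal T)
      ((isNoetherianRing_iff_ideal_fg T).1 inferInstance _) ?_ ?_
    · rw [IsLocalRing.jacobson_eq_maximalIdeal ⊥ bot_ne_top]
    · intro x hx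
      obtain ⟨s, hs, hsx⟩ := h2 x
      have hsq : maximalIdeal T ^ 2 ≤ maximalIdeal T := Ideal.pow_le_self two_ne_zero
      have hsm : s ∈ maximalIdeal T := by
        have := (maximalIdeal T).add_mem (hsq hsx) hx
        simpa using this
      have : x = s + -(s - x) := by ring
      rw [this]
      refine Submodule.add_mem_sup ?_ ?_
      · apply Ideal.mem_map_of_mem (algebraMap A T) (x := (⟨s, hs⟩ : A))
        rw [mem_maximalIdeal, mem_nonunits_iff] at hsm ⊢
        intro hu
        exact hsm (hu.map (algebraMap A T))
      · rw [smul_eq_mul, ← pow_two]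
        exact neg_mem hsx

lemma dense {A : Subring T} (h2 : ∀ c : T, ∃ s ∈ A, s - c ∈ maximalIdeal T ^ 2)
    [IsLocalRing A] [IsLocalHom (algebraMap A T)] (k : ℕ) :
    ∀ c : T, ∃ s : A, (s : T) - c ∈ maximalIdeal T ^ k := by
  have hm := map_max h2
  have h1 : ∀ c : T, ∃ s : A, (s : T) - c ∈ maximalIdeal T := by
    intro c
    obtain ⟨s, hs, h⟩ := h2 c
    exact ⟨⟨s, hs⟩, Ideal.pow_le_self two_ne_zero h⟩
  have key : ∀ k, ∀ e ∈ maximalIdeal T ^ k, ∃ s ∈ maximalIdeal A ^ k,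
      (s : T) - e ∈ maximalIdeal T ^ (k + 1) := by
    intro k e he
    have hmk : maximalIdeal T ^ k = Ideal.span (algebraMap A T '' (maximalIdeal A ^ k : Ideal A)) := by
      rw [← hm, ← Ideal.map_pow]; rfl
    rw [hmk] at he
    induction he using Submodule.span_induction with
    | mem x h =>
      obtain ⟨a, ha, rfl⟩ := h
      exact ⟨a, ha, by
        have : (a : T) - algebraMap A T a = 0 := sub_self _
        rw [this]; exact zero_mem _⟩
    | zero => exact ⟨0, zero_mem _, by simp⟩
    | add x y _ _ hx hy =>
      obtain ⟨s, hs, h⟩ := hx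
      obtain ⟨s', hs', h'⟩ := hy
      refine ⟨s + s', add_mem hs hs', ?_⟩
      have := add_mem h h'
      convert this using 1
      push_cast; ring
    | smul t x _ hx =>
      obtain ⟨s, hs, h⟩ := hx
      obtain ⟨t0, ht0⟩ := h1 t
      refine ⟨t0 * s, Ideal.mul_mem_left _ _ hs, ?_⟩
      have e1 : ((t0 * s : A) : T) - t • x = t * (s - x) + (t0 - t) * s := by
        push_cast; rw [smul_eq_mul]; ring
      rw [e1]
      refine add_mem (Ideal.mul_mem_left _ _ h) ?_
      rw [pow_succ']
      refine Ideal.mul_mem_mul ht0 ?_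
      rw [hmk]
      exact Ideal.subset_span ⟨s, hs, rfl⟩
  induction k with
  | zero => intro c; exact ⟨0, by simp⟩
  | succ k ih =>
    intro c
    obtain ⟨s, hs⟩ := ih c
    obtain ⟨s', -, hs'⟩ := key k _ hs
    refine ⟨s - s', ?_⟩
    have := neg_mem hs'
    convert this using 1
    push_cast; ring

lemma comap_pow {A : Subring T} (hA : Contr A)
    (h2 : ∀ c : T, ∃ s ∈ A, s - c ∈ maximalIdeal T ^ 2)
    [IsLocalRing A] [IsLocalHom (algebraMap A T)] (k : ℕ) (a : A) :
    (a : T) ∈ maximalIdeal T ^ k ↔ a ∈ maximalIdeal A ^ k := by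
  rw [← map_max h2, ← Ideal.map_pow]
  exact ⟨contr hA _, fun h => Ideal.mem_map_of_mem (algebraMap A T) h⟩

lemma exists_completion {A : Subring T} (hA : Contr A)
    (h2 : ∀ c : T, ∃ s ∈ A, s - c ∈ maximalIdeal T ^ 2) [IsAdicComplete (maximalIdeal T) T]
    [IsLocalRing A] [IsLocalHom (algebraMap A T)] :
    ∃ e : AdicCompletion (maximalIdeal A) A ≃+* T, ∀ a,
      e (algebraMap A (AdicCompletion (maximalIdeal A) A) a) = a := by
  let g : ∀ k, (A ⧸ maximalIdeal A ^ k) →+* (T ⧸ maximalIdeal T ^ k) := fun k =>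
    Ideal.quotientMap _ (algebraMap A T) (fun a ha => (comap_pow hA h2 k a).2 ha)
  have hg : ∀ k, Function.Injective (g k) := fun k => Ideal.quotientMap_injective'
    (fun a ha => (comap_pow hA h2 k a).1 ha)
  let f : ∀ k, AdicCompletion (maximalIdeal A) A →+* T ⧸ maximalIdeal T ^ k := fun k =>
    (g k).comp (AdicCompletion.evalₐ (maximalIdeal A) k).toRingHom
  have hfx : ∀ k x, f k x = g k (AdicCompletion.evalₐ (maximalIdeal A) k x) := fun _ _ => rfl
  have hf : ∀ {m n : ℕ} (hle : m ≤ n),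
      (Ideal.Quotient.factorPow (maximalIdeal T) hle).comp (f n) = f m := by
    intro m n hle
    ext x
    obtain ⟨y, rfl⟩ := AdicCompletion.mk_surjective _ _ x
    rw [RingHom.comp_apply, hfx, hfx, AdicCompletion.evalₐ_mk, AdicCompletion.evalₐ_mk]
    have h := y.2 hle
    rw [SModEq.sub_mem, smul_eq_mul, Ideal.mul_top, ← comap_pow hA h2] at h
    have h' := neg_mem h
    change Ideal.Quotient.mk (maximalIdeal T ^ m) ((y n : A) : T) =
      Ideal.Quotient.mk (maximalIdeal T ^ m) ((y m : A) : T)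
    rw [Ideal.Quotient.eq]
    convert h' using 1
    push_cast
    rw [neg_sub]
  let F := IsAdicComplete.liftRingHom (maximalIdeal T) f hf
  have hF : ∀ n x, Ideal.Quotient.mk (maximalIdeal T ^ n) (F x) = f n x :=
    fun n x => IsAdicComplete.mk_liftRingHom _ f hf n x
  have hinj : Function.Injective F := by
    rw [injective_iff_map_eq_zero]
    intro x hx
    apply AdicCompletion.ext_evalₐ
    intro n
    apply hg n
    have := hF n x
    rw [hx, map_zero] at this
    rw [map_zero, map_zero]
    exact this.symm
  have hhaus : ∀ x y : T, (∀ n, Ideal.Quotient.mk (maximalIdeal T ^ n) x =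
      Ideal.Quotient.mk (maximalIdeal T ^ n) y) → x = y := by
    intro x y h
    rw [← sub_eq_zero]
    apply IsHausdorff.haus (inferInstance : IsHausdorff (maximalIdeal T) T)
    intro n
    rw [SModEq.zero, smul_eq_mul, Ideal.mul_top]
    exact Ideal.Quotient.eq.1 (h n)
  have hsurj : Function.Surjective F := by
    intro t
    choose s hs using fun k => dense h2 k t
    have hc : AdicCompletion.IsAdicCauchy (maximalIdeal A) A s := by
      intro m n hmn
      rw [SModEq.sub_mem, smul_eq_mul, Ideal.mul_top, ← comap_pow hA h2]
      have := sub_mem (hs m) (Ideal.pow_le_pow_right hmn (hs n))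
      convert this using 1
      push_cast; ring
    obtain ⟨y, hy⟩ : ∃ y : AdicCompletion.AdicCauchySequence (maximalIdeal A) A, ∀ n, y n = s n :=
      ⟨⟨s, hc⟩, fun _ => rfl⟩
    refine ⟨AdicCompletion.mk _ _ y, hhaus _ _ fun n => ?_⟩
    rw [hF, hfx, AdicCompletion.evalₐ_mk, hy]
    exact Ideal.Quotient.eq.2 (hs n)
  refine ⟨RingEquiv.ofBijective F ⟨hinj, hsurj⟩, fun a => hhaus _ _ fun n => ?_⟩
  change Ideal.Quotient.mk (maximalIdeal T ^ n) (F _) = _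
  rw [hF, hfx, AlgHom.commutes]
  rfl

lemma isUFD [IsDomain T] (hcop : ∀ a b : T, ∃ α β, α * b = β * a ∧ ∀ r s, r * b = s * a → α ∣ r)
    {A : Subring T} (hA : Contr A)
    (h2 : ∀ c : T, ∃ s ∈ A, s - c ∈ maximalIdeal T ^ 2) [IsAdicComplete (maximalIdeal T) T] :
    UniqueFactorizationMonoid A := by
  have := isLocal hA
  have := localHom hA
  have := noeth hA
  obtain ⟨e, he⟩ := exists_completion hA h2
  have hflat : Module.Flat A T :=
    Module.Flat.of_linearEquiv (M := AdicCompletion (maximalIdeal A) A) (N := T)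
      (AlgEquiv.ofRingEquiv (f := e) he).symm.toLinearEquiv
  have key : ∀ a b : A, a ≠ 0 → ∃ c : A, a ∣ c * b ∧ ∀ r : A, a ∣ r * b → c ∣ r := by
    intro a b ha
    have ha' : (a : T) ≠ 0 := fun h => ha (Subtype.ext h)
    obtain ⟨α, β, e1, hα⟩ := hcop a b
    have hα0 : α ≠ 0 := by
      rintro rfl
      exact ha' (zero_dvd_iff.1 (hα a b (mul_comm _ _)))
    have hrel : ∑ i : Fin 2, (![b, -a] i) • (![α, β] i) = 0 := by
      simp [Fin.sum_univ_two, Algebra.smul_def]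
      have : algebraMap A T a = a := rfl
      have : algebraMap A T b = b := rfl
      simp only [*]
      linear_combination e1
    obtain ⟨k, m, y, hy, hm⟩ := Module.Flat.isTrivialRelation_of_sum_smul_eq_zero hrel
    have hm' : ∀ j, m 0 j * b = m 1 j * a := by
      intro j
      have := hm j
      simp [Fin.sum_univ_two] at this
      linear_combination this
    have hd : ∀ j, α ∣ (m 0 j : T) := fun j => hα _ (m 1 j) (by exact_mod_cast congrArg Subtype.val (hm' j))
    choose w hw using hd
    have hsum : ∑ j, w j * y j = 1 := by
      apply mul_left_cancel₀ hα0
      rw [mul_one, Finset.mul_sum]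
      have := hy 0
      simp only [Matrix.cons_val_zero] at this
      conv_rhs => rw [this]
      refine Finset.sum_congr rfl fun j _ => ?_
      rw [Algebra.smul_def]
      change α * (w j * y j) = (m 0 j : T) * y j
      rw [hw]; ring
    have : ∃ j, IsUnit (w j) := by
      by_contra! hcon
      have : (1 : T) ∈ maximalIdeal T := by
        rw [← hsum]
        exact sum_mem fun j _ => Ideal.mul_mem_right _ _ ((mem_maximalIdeal _).2 (hcon j))
      exact (Ideal.ne_top_iff_one _).1 (maximalIdeal.isMaximal T).ne_top this
    obtain ⟨j, hj⟩ := this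
    refine ⟨m 0 j, ⟨m 1 j, by rw [hm' j, mul_comm]⟩, fun r hr => ?_⟩
    apply dvd_of_dvd hA
    rw [hw, hj.mul_right_dvd]
    obtain ⟨s, hs⟩ := hr
    refine hα r s ?_
    have := congrArg Subtype.val hs
    push_cast at this
    rw [this, mul_comm]
  have hirr : ∀ p : A, Irreducible p → Prime p := by
    intro p hp
    refine ⟨hp.ne_zero, hp.not_isUnit, fun x y hxy => ?_⟩
    obtain ⟨c, hc, hr⟩ := key p x hp.ne_zero
    have hcp := hr p (dvd_mul_right _ _)
    rcases hp.dvd_iff.1 hcp with hu | hu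
    · left
      exact (hu.dvd_mul_left).1 hc
    · right
      exact hu.dvd.trans (hr y (by rwa [mul_comm]))
  exact { irreducible_iff_prime := ⟨hirr _, Prime.irreducible⟩ }

end
end LUFD

end P4part

section P5part
open Polynomial Cardinal IsLocalRing
namespace LUFD

section
variable {R : Type*} [CommRing R] [IsDomain R] [IsLocalRing R]
  [IsAdicComplete (maximalIdeal R) R] [UniqueFactorizationMonoid R]

lemma ws_prime (f : PowerSeries R) (hf : Irreducible f)
    (hreg : f.map (IsLocalRing.residue R) ≠ 0) : Prime f := by
  obtain ⟨g, h, H⟩ := PowerSeries.exists_isWeierstrassFactorization hreg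
  have hgm : g.Monic := H.isDistinguishedAt.monic
  have hgu : ¬ IsUnit g := by
    intro hu
    apply hf.not_isUnit
    rw [H.eq_mul]
    exact (hu.map (Polynomial.coeToPowerSeries.ringHom (R := R))).mul H.isUnit
  obtain ⟨p, hp, w, hw⟩ := WfDvdMonoid.exists_irreducible_factor hgu hgm.ne_zero
  have hlc : p.leadingCoeff * w.leadingCoeff = 1 := by
    rw [← Polynomial.leadingCoeff_mul, ← hw]; exact hgm
  -- normalise
  obtain ⟨p', hp'm, hp', w', hw'⟩ : ∃ p' : R[X], p'.Monic ∧ Prime p' ∧ p' ∣ g := by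
    have hu : IsUnit (Polynomial.C w.leadingCoeff : R[X]) :=
      (IsUnit.of_mul_eq_one p.leadingCoeff (by rw [mul_comm]; exact hlc)).map Polynomial.C
    have hass : Associated p (p * Polynomial.C w.leadingCoeff) :=
      (associated_mul_unit_right p _ hu)
    refine ⟨p * Polynomial.C w.leadingCoeff, ?_, hass.prime hp.prime, ?_⟩
    · rw [Polynomial.Monic, Polynomial.leadingCoeff_mul, Polynomial.leadingCoeff_C, hlc]
    · exact hass.symm.dvd.trans ⟨w, hw⟩
  have hdist : p'.IsDistinguishedAt (maximalIdeal R) := by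
    have h1 : p'.map (IsLocalRing.residue R) ∣ Polynomial.X ^ g.natDegree := by
      have h0 : g.map (IsLocalRing.residue R) = Polynomial.X ^ g.natDegree :=
        H.isDistinguishedAt.map_eq_X_pow
      rw [← h0]
      exact Polynomial.map_dvd _ ⟨w', hw'⟩
    obtain ⟨k, hk, hk'⟩ := (dvd_prime_pow Polynomial.prime_X _).1 h1
    have h2 := Polynomial.eq_of_monic_of_associated (hp'm.map _) (Polynomial.monic_X_pow k) hk'
    have h3 : p'.natDegree = k := by
      rw [← hp'm.natDegree_map (IsLocalRing.residue R), h2, Polynomial.natDegree_X_pow]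
    refine ⟨⟨?_⟩, hp'm⟩
    intro i hi
    rw [← IsLocalRing.residue_eq_zero_iff, ← Polynomial.coeff_map, h2, Polynomial.coeff_X_pow,
      if_neg (by omega)]
  have hprime : Prime (p' : PowerSeries R) := by
    have h0 : (p' : PowerSeries R) ≠ 0 := by
      intro h; exact hp'.ne_zero (Polynomial.coe_injective R (by simpa using h))
    rw [← Ideal.span_singleton_prime h0, ← Ideal.Quotient.isDomain_iff_prime]
    have : IsDomain (R[X] ⧸ Ideal.span {p'}) :=
      (Ideal.Quotient.isDomain_iff_prime _).2 ((Ideal.span_singleton_prime hp'.ne_zero).2 hp')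
    exact hdist.algEquivQuotient.symm.toMulEquiv.isDomain _
  have hfe : f = (p' : PowerSeries R) * ((w' : PowerSeries R) * h) := by
    rw [H.eq_mul, hw', Polynomial.coe_mul, mul_assoc]
  have hu := (hf.isUnit_or_isUnit hfe).resolve_left hprime.not_isUnit
  rw [hfe]
  exact (associated_mul_unit_right _ _ hu).prime hprime

end

/-- The formal power series ring over `ℂ`. -/
abbrev PS (n : ℕ) := MvPowerSeries (Fin n) ℂ

/-- setting the first variable to zero -/
noncomputable def phi (n : ℕ) : PS (n+1) →+* PS n :=
  (PowerSeries.constantCoeff (R := PS n)).comp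
    (MvPowerSeries.finSuccEquiv ℂ n : PS (n+1) →+* PowerSeries (PS n))

lemma phi_apply (n : ℕ) (f : PS (n+1)) :
  phi n f = PowerSeries.constantCoeff (MvPowerSeries.finSuccEquiv ℂ n f) := rfl

lemma phi_surj (n : ℕ) : Function.Surjective (phi n) := by
  intro f
  refine ⟨(MvPowerSeries.finSuccEquiv ℂ n).symm (PowerSeries.C f), ?_⟩
  rw [phi_apply]; simp

lemma phi_ker (n : ℕ) : RingHom.ker (phi n) = Ideal.span {MvPowerSeries.X 0} := by
  ext f
  rw [RingHom.mem_ker, phi_apply, ← PowerSeries.X_dvd_iff, Ideal.mem_span_singleton,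
    ← MvPowerSeries.finSuccEquiv_X_zero, map_dvd_iff]

lemma phi_X_succ (n : ℕ) (j : Fin n) : phi n (MvPowerSeries.X j.succ) = MvPowerSeries.X j := by
  rw [phi_apply]; simp

instance domPS (n : ℕ) : IsDomain (PS n) := NoZeroDivisors.to_isDomain _

/-- the ideal generated by the first `i` variables -/
noncomputable def Qi : (n i : ℕ) → Ideal (PS n)
  | _, 0 => ⊥
  | 0, _ + 1 => ⊥
  | n + 1, i + 1 => (Qi n i).comap (phi n)

lemma Qi_prime : ∀ (n i : ℕ), (Qi n i).IsPrime
  | 0, 0 => by rw [Qi]; exact Ideal.isPrime_bot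
  | n+1, 0 => by rw [Qi]; exact Ideal.isPrime_bot
  | 0, i + 1 => by rw [Qi]; exact Ideal.isPrime_bot
  | n + 1, i + 1 => by
    have := Qi_prime n i
    rw [Qi]; exact Ideal.comap_isPrime _ _

lemma Qi_lt : ∀ (n i : ℕ), i < n → Qi n i < Qi n (i+1)
  | 0, _, h => by omega
  | n+1, 0, _ => by
    rw [Qi, Qi, bot_lt_iff_ne_bot]
    intro h
    have : (MvPowerSeries.X 0 : PS (n+1)) ∈ RingHom.ker (phi n) := by
      rw [phi_ker]; exact Ideal.mem_span_singleton_self _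
    have h2 : (MvPowerSeries.X 0 : PS (n+1)) ∈ (⊥ : Ideal (PS (n+1))) := by
      rw [← h]
      rw [Ideal.mem_comap]
      rw [RingHom.mem_ker.1 this]; exact Ideal.zero_mem _
    have h3 := congrArg (MvPowerSeries.coeff (Finsupp.single 0 1)) (Ideal.mem_bot.1 h2)
    simp [MvPowerSeries.coeff_X] at h3
  | n+1, i+1, h => by
    rw [Qi, Qi]
    have := Qi_lt n i (by omega)
    refine lt_of_le_of_ne (Ideal.comap_mono this.le) ?_
    intro h
    exact this.ne (Ideal.comap_injective_of_surjective _ (phi_surj n) h)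

lemma Qi_top : ∀ n, Qi n n = maximalIdeal (PS n)
  | 0 => by
    rw [Qi]
    have : IsField (PS 0) := 
      (MvPowerSeries.isEmptyEquiv (σ := Fin 0) (R := ℂ)).toMulEquiv.isField (Field.toIsField ℂ)
    exact ((IsLocalRing.isField_iff_maximalIdeal_eq).1 this).symm
  | n+1 => by
    rw [Qi, Qi_top n]
    have := Ideal.comap_isMaximal_of_surjective _ (phi_surj n) (K := maximalIdeal (PS n))
    exact IsLocalRing.eq_maximalIdeal this

lemma Qi_gen : ∀ (n i : ℕ), ∃ s : Finset (PS n), s.card ≤ i ∧ Qi n i = Ideal.span s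
  | 0, 0 => ⟨∅, by simp, by rw [Qi]; simp⟩
  | n+1, 0 => ⟨∅, by simp, by rw [Qi]; simp⟩
  | 0, i + 1 => ⟨∅, by simp, by rw [Qi]; simp⟩
  | n + 1, i + 1 => by
    classical
    obtain ⟨s, hs, h⟩ := Qi_gen n i
    let σ := Function.surjInv (phi_surj n)
    refine ⟨insert (MvPowerSeries.X 0) (s.image σ), ?_, ?_⟩
    · exact (Finset.card_insert_le _ _).trans (by have := Finset.card_image_le (s := s) (f := σ); omega)
    · rw [Qi, h]
      have : Ideal.span (s : Set (PS n)) = (Ideal.span (σ '' s)).map (phi n) := by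
        rw [Ideal.map_span, Set.image_image]
        simp [σ, Function.surjInv_eq]
      rw [this, Ideal.comap_map_of_surjective' _ (phi_surj n), phi_ker, sup_comm,
        ← Ideal.span_union]
      simp

lemma Qi_le_X : ∀ n, Qi n n ≤ Ideal.span (Set.range MvPowerSeries.X)
  | 0 => by rw [Qi]; exact bot_le
  | n+1 => by
    rw [Qi]
    refine (Ideal.comap_mono (Qi_le_X n)).trans ?_
    have : Ideal.span (Set.range (MvPowerSeries.X : Fin n → PS n)) = (Ideal.span (Set.range 
        (fun j : Fin n => (MvPowerSeries.X j.succ : PS (n+1))))).map (phi n) := by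
      rw [Ideal.map_span, ← Set.range_comp]
      congr 2; ext1 j; simp [phi_X_succ]
    rw [this, Ideal.comap_map_of_surjective' _ (phi_surj n), phi_ker]
    refine sup_le (Ideal.span_mono ?_) (Ideal.span_mono ?_)
    · rintro _ ⟨j, rfl⟩; exact ⟨j.succ, rfl⟩
    · rintro _ rfl; exact ⟨0, rfl⟩

lemma max_eq (n : ℕ) : maximalIdeal (PS n) = Ideal.span (Set.range MvPowerSeries.X) := by
  refine le_antisymm (Qi_top n ▸ Qi_le_X n) ?_
  rw [Ideal.span_le]
  rintro _ ⟨j, rfl⟩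
  show _ ∈ nonunits _
  rw [mem_nonunits_iff, MvPowerSeries.isUnit_iff_constantCoeff]
  simp

instance complete (n : ℕ) : IsAdicComplete (maximalIdeal (PS n)) (PS n) := by
  rw [max_eq]; infer_instance

lemma card_PS (n : ℕ) : #(PS n) ≤ 𝔠 := by
  have : #(PS n) = #((Fin n →₀ ℕ) → ℂ) := rfl
  rw [this, ← Cardinal.power_def, Cardinal.mk_complex]
  calc 𝔠 ^ #(Fin n →₀ ℕ) ≤ 𝔠 ^ ℵ₀ := Cardinal.power_le_power_left Cardinal.continuum_ne_zero
        Cardinal.mk_le_aleph0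
    _ = 𝔠 := Cardinal.continuum_power_aleph0
end LUFD

end P5part

section P6part
open Polynomial Cardinal IsLocalRing
namespace LUFD

/-- setting all variables except the first to zero -/
noncomputable def rho (n : ℕ) : PS (n+1) →+* PowerSeries ℂ :=
  (PowerSeries.map (MvPowerSeries.constantCoeff (σ := Fin n) (R := ℂ))).comp
    (MvPowerSeries.finSuccEquiv ℂ n : PS (n+1) →+* PowerSeries (PS n))

lemma rho_apply (n : ℕ) (f : PS (n+1)) : rho n f =
    PowerSeries.map (MvPowerSeries.constantCoeff (σ := Fin n) (R := ℂ))
      (MvPowerSeries.finSuccEquiv ℂ n f) := rfl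

lemma coeff_rho (n : ℕ) (f : PS (n+1)) (k : ℕ) :
    PowerSeries.coeff k (rho n f) = MvPowerSeries.coeff (Finsupp.cons k 0) f := by
  rw [← MvPowerSeries.coeff_coeff_finSuccEquiv]
  rw [rho_apply, PowerSeries.coeff_map]; rfl

lemma rho_X_zero (n : ℕ) : rho n (MvPowerSeries.X 0) = PowerSeries.X := by
  rw [rho_apply]; simp

lemma rho_X_succ (n : ℕ) (j : Fin n) : rho n (MvPowerSeries.X j.succ) = 0 := by
  rw [rho_apply]; simp

lemma rho_C (n : ℕ) (c : ℂ) : rho n (MvPowerSeries.C c) = PowerSeries.C c := by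
  rw [rho_apply]; simp

/-- a linear change of coordinates -/
noncomputable def lin (n : ℕ) (v0 : ℂ) (v : Fin n → ℂ) : Fin (n+1) → PS (n+1) :=
  Fin.cons (MvPowerSeries.C v0 * MvPowerSeries.X 0)
    (fun i => MvPowerSeries.X i.succ + MvPowerSeries.C (v i) * MvPowerSeries.X 0)

lemma lin_hasSubst (n : ℕ) (v0 : ℂ) (v : Fin n → ℂ) : MvPowerSeries.HasSubst (lin n v0 v) := by
  apply MvPowerSeries.hasSubst_of_constantCoeff_zero
  intro i
  induction i using Fin.cases <;> simp [lin]

lemma lin_comp (n : ℕ) (v0 w0 : ℂ) (v w : Fin n → ℂ) (h0 : v0 * w0 = 1)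
    (h : ∀ i, w i + v i * w0 = 0) (f : PS (n+1)) :
    MvPowerSeries.substAlgHom (R := ℂ) (S := ℂ) (lin_hasSubst n w0 w)
      (MvPowerSeries.substAlgHom (R := ℂ) (S := ℂ) (lin_hasSubst n v0 v) f) = f := by
  rw [MvPowerSeries.substAlgHom_comp_substAlgHom_apply, MvPowerSeries.substAlgHom_apply]
  have : (fun s => MvPowerSeries.substAlgHom (R := ℂ) (S := ℂ) (lin_hasSubst n w0 w) (lin n v0 v s)) =
     MvPowerSeries.X := by
    have hC : ∀ c : ℂ, (MvPowerSeries.C c : PS (n+1)) = algebraMap ℂ _ c := fun c => rfl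
    funext s
    induction s using Fin.cases with
    | zero =>
      simp only [lin, Fin.cons_zero, map_mul, hC, AlgHom.commutes, MvPowerSeries.substAlgHom_X]
      rw [← mul_assoc, ← map_mul, h0, map_one, one_mul]
    | succ i =>
      simp only [lin, Fin.cons_zero, Fin.cons_succ, map_add, map_mul, hC, AlgHom.commutes, 
        MvPowerSeries.substAlgHom_X]
      rw [add_assoc, ← mul_assoc, ← add_mul, ← map_mul, ← map_add, h, map_zero, zero_mul, add_zero]
  have h2 := congrFun (MvPowerSeries.subst_self (σ := Fin (n+1)) (R := ℂ)) f
  rw [← this] at h2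
  exact h2

lemma rho_lin (n : ℕ) (v : Fin (n+1) → ℂ) (i : Fin (n+1)) :
    rho n (lin n (v 0) (fun i => v i.succ) i) = PowerSeries.C (v i) * PowerSeries.X := by
  induction i using Fin.cases with
  | zero => simp [lin, rho_C, rho_X_zero]
  | succ i => simp [lin, rho_C, rho_X_zero, rho_X_succ]

lemma coeff_lin (n : ℕ) (v : Fin (n+1) → ℂ) (f : PS (n+1)) (d : ℕ) :
    MvPowerSeries.coeff (Finsupp.cons d 0) (MvPowerSeries.substAlgHom (R := ℂ) (S := ℂ)
      (lin_hasSubst n (v 0) (fun i => v i.succ)) f) =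
    MvPolynomial.eval v (∑ m ∈ Finset.finsuppAntidiag Finset.univ d,
      MvPolynomial.monomial m (MvPowerSeries.coeff m f)) := by
  rw [MvPowerSeries.substAlgHom_apply, MvPowerSeries.coeff_subst (lin_hasSubst n _ _), map_sum]
  have key : ∀ m : Fin (n+1) →₀ ℕ, MvPowerSeries.coeff (Finsupp.cons d 0) (m.prod
      fun s e => lin n (v 0) (fun i => v i.succ) s ^ e) =
      if m.degree = d then m.prod (fun s e => v s ^ e) else 0 := by
    intro m
    rw [← coeff_rho, map_finsuppProd]
    simp only [map_pow, rho_lin, mul_pow]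
    rw [Finsupp.prod_mul]
    have h1 : (m.prod fun i e => (PowerSeries.C (v i)) ^ e) = 
        PowerSeries.C (m.prod fun i e => v i ^ e) := by
      rw [map_finsuppProd]; simp
    have h2 : (m.prod fun i e => (PowerSeries.X : PowerSeries ℂ) ^ e) = 
        PowerSeries.X ^ m.degree := by
      rw [Finsupp.prod, Finset.prod_pow_eq_pow_sum]; rfl
    rw [h1, h2, PowerSeries.coeff_C_mul_X_pow]
    simp only [eq_comm]
  simp only [key]
  rw [finsum_eq_sum_of_support_subset (s := Finset.finsuppAntidiag Finset.univ d)]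
  · apply Finset.sum_congr rfl
    intro m hm
    rw [Finset.mem_finsuppAntidiag] at hm
    have : m.degree = d := by rw [Finsupp.degree_eq_sum]; exact hm.1
    rw [if_pos this, MvPolynomial.eval_monomial]; rfl
  · intro m hm
    simp only [Function.mem_support] at hm
    have h : m.degree = d := by by_contra h; simp [h] at hm
    simp only [Finset.mem_coe, Finset.mem_finsuppAntidiag]
    refine ⟨?_, Finset.subset_univ _⟩
    rw [← h, Finsupp.degree_eq_sum]

lemma exists_regular (n : ℕ) (f : PS (n+1)) (hf : f ≠ 0) : ∃ σ : PS (n+1) ≃+* PowerSeries (PS n),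
    (σ f).map (IsLocalRing.residue (PS n)) ≠ 0 := by
  obtain ⟨m, hm⟩ : ∃ m, MvPowerSeries.coeff m f ≠ 0 := by
    by_contra! h
    exact hf (MvPowerSeries.ext h)
  set P : MvPolynomial (Fin (n+1)) ℂ := ∑ m ∈ Finset.finsuppAntidiag Finset.univ m.degree,
      MvPolynomial.monomial m (MvPowerSeries.coeff m f) with hP
  have hP0 : P ≠ 0 := by
    intro h
    have h2 := congrArg (MvPolynomial.coeff m) h
    rw [hP, MvPolynomial.coeff_sum] at h2
    simp only [MvPolynomial.coeff_monomial, MvPolynomial.coeff_zero] at h2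
    rw [Finset.sum_ite_eq', if_pos] at h2
    · exact hm h2
    · simp [Finset.mem_finsuppAntidiag, Finsupp.degree_eq_sum]
  obtain ⟨v, hv⟩ : ∃ v, MvPolynomial.eval v (MvPolynomial.X 0 * P) ≠ 0 := by
    by_contra! h
    have : MvPolynomial.X 0 * P = 0 := MvPolynomial.funext (by simpa using h)
    rcases mul_eq_zero.1 this with h | h
    · exact MvPolynomial.X_ne_zero _ h
    · exact hP0 h
  rw [map_mul, MvPolynomial.eval_X] at hv
  have hv0 := left_ne_zero_of_mul hv
  have hv1 := right_ne_zero_of_mul hv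
  let τ : PS (n+1) ≃+* PS (n+1) := RingEquiv.ofRingHom
    (MvPowerSeries.substAlgHom (R := ℂ) (S := ℂ) (lin_hasSubst n (v 0) (fun i => v i.succ)) :
      PS (n+1) →+* PS (n+1))
    (MvPowerSeries.substAlgHom (R := ℂ) (S := ℂ) (lin_hasSubst n (v 0)⁻¹ 
      (fun i => - v i.succ * (v 0)⁻¹)) : PS (n+1) →+* PS (n+1))
    (by
      ext1 g
      exact lin_comp n _ _ _ _ (inv_mul_cancel₀ hv0) (by intro i; field_simp; ring) g)
    (by
      ext1 g
      exact lin_comp n _ _ _ _ (mul_inv_cancel₀ hv0) (by intro i; ring) g)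
  refine ⟨τ.trans (MvPowerSeries.finSuccEquiv ℂ n).toRingEquiv, ?_⟩
  intro h
  apply hv1
  rw [hP, ← coeff_lin]
  have h2 := congrArg (PowerSeries.coeff m.degree) h
  rw [PowerSeries.coeff_map, map_zero, IsLocalRing.residue_eq_zero_iff, 
    IsLocalRing.mem_maximalIdeal, mem_nonunits_iff, MvPowerSeries.isUnit_iff_constantCoeff,
    isUnit_iff_ne_zero, not_not] at h2
  rw [← MvPowerSeries.coeff_coeff_finSuccEquiv]
  exact h2

theorem ufd_PS : ∀ n, UniqueFactorizationMonoid (PS n)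
  | 0 => by
    have : IsField (PS 0) := 
      (MvPowerSeries.isEmptyEquiv (σ := Fin 0) (R := ℂ)).toMulEquiv.isField (Field.toIsField ℂ)
    let := this.toField
    infer_instance
  | n+1 => by
    have := ufd_PS n
    have : WfDvdMonoid (PS (n+1)) := IsNoetherianRing.wfDvdMonoid
    refine { irreducible_iff_prime := ?_ }
    intro f
    refine ⟨fun hf => ?_, Prime.irreducible⟩
    obtain ⟨σ, hσ⟩ := exists_regular n f hf.ne_zero
    have h1 : Irreducible (σ f) := (MulEquiv.irreducible_iff σ.toMulEquiv).2 hf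
    exact (MulEquiv.prime_iff σ.toMulEquiv).1 (ws_prime _ h1 hσ)

lemma cop_of_ufd {T : Type} [CommRing T] [IsDomain T] [UniqueFactorizationMonoid T] (a b : T) :
    ∃ α β : T, α * b = β * a ∧ ∀ r s, r * b = s * a → α ∣ r := by
  classical
  by_cases ha : a = 0
  · by_cases hb : b = 0
    · exact ⟨1, 1, by simp [ha, hb], fun r s _ => one_dvd _⟩
    · refine ⟨0, 0, by simp, fun r s h => ?_⟩
      rw [ha, mul_zero] at h
      rw [(mul_eq_zero.1 h).resolve_right hb]
  · obtain ⟨a', b', c, h1, h2, h3⟩ := UniqueFactorizationMonoid.exists_reduced_factors a ha b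
    refine ⟨a', b', by rw [← h2, ← h3]; ring, fun r s h => ?_⟩
    have hc : c ≠ 0 := by rintro rfl; exact ha (by simpa using h2.symm)
    have h4 : r * b' = s * a' := by
      apply mul_left_cancel₀ hc
      rw [← h2, ← h3] at h; linear_combination h
    exact h1.dvd_of_dvd_mul_right ⟨s, by rw [h4, mul_comm]⟩

end LUFD

end P6part

section P7part
open Polynomial Cardinal IsLocalRing
namespace LUFD

section
variable {T : Type} [CommRing T]

/-- the primes lying directly above `Q` -/
def above (Q : Ideal T) : Set (Ideal T) :=
  {q | q.IsPrime ∧ Q < q ∧ ∀ p : Ideal T, p.IsPrime → Q < p → p ≤ q → p = q}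

lemma above_min {Q : Ideal T} {q : Ideal T} (hq : q ∈ above Q) {r : T} (hr : r ∉ Q) (hrq : r ∈ q) :
    q ∈ (Q ⊔ Ideal.span {r}).minimalPrimes := by
  refine ⟨⟨hq.1, sup_le hq.2.1.le ((Ideal.span_singleton_le_iff_mem _).2 hrq)⟩, ?_⟩
  rintro p ⟨hp, hle⟩ hpq
  refine (hq.2.2 p hp ?_ hpq).ge
  refine lt_of_le_of_ne (le_sup_left.trans hle) ?_
  rintro rfl
  exact hr (hle (Ideal.mem_sup_right (Ideal.mem_span_singleton_self r)))

variable [IsNoetherianRing T]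

lemma above_fin {Q : Ideal T} {r : T} (hr : r ∉ Q) : {q ∈ above Q | r ∈ q}.Finite :=
  ((Q ⊔ Ideal.span {r}).finite_minimalPrimes_of_isNoetherianRing).subset
    fun _ hq => above_min hq.1 hr hq.2

lemma exists_above {Q P : Ideal T} (hQ : Q.IsPrime) [P.IsPrime] (hQP : Q ≤ P) {r : T} (hr : r ∉ Q)
    (hrP : r ∈ P) : ∃ q ∈ above Q, r ∈ q := by
  obtain ⟨q, hq, hqP⟩ := Ideal.exists_minimalPrimes_le (I := Q ⊔ Ideal.span {r}) (J := P)
    (sup_le hQP ((Ideal.span_singleton_le_iff_mem _).2 hrP))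
  have hqp : q.IsPrime := hq.isPrime
  have hrq : r ∈ q := hq.le (Ideal.mem_sup_right (Ideal.mem_span_singleton_self r))
  have hQq : Q ≤ q := le_sup_left.trans hq.le
  refine ⟨q, ⟨hqp, lt_of_le_of_ne hQq (by rintro rfl; exact hr hrq), ?_⟩, hrq⟩
  intro p hp hQp hpq
  by_contra hne
  have hlt : p < q := lt_of_le_of_ne hpq hne
  have h1 := Ideal.map_height_le_one_of_mem_minimalPrimes hq
  have hker : ∀ I : Ideal T, Q ≤ I → RingHom.ker (Ideal.Quotient.mk Q) ≤ I := fun I h => by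
    rwa [Ideal.mk_ker]
  have p1 : (p.map (Ideal.Quotient.mk Q)).IsPrime :=
    Ideal.map_isPrime_of_surjective Ideal.Quotient.mk_surjective (hker _ hQp.le)
  have p2 : (q.map (Ideal.Quotient.mk Q)).IsPrime :=
    Ideal.map_isPrime_of_surjective Ideal.Quotient.mk_surjective (hker _ hQq)
  have p0 : (⊥ : Ideal (T ⧸ Q)).IsPrime := by
    have := (Ideal.Quotient.isDomain_iff_prime Q).2 hQ
    exact Ideal.isPrime_bot
  have hmono : ∀ I J : Ideal T, Q ≤ I → I < J → 
      I.map (Ideal.Quotient.mk Q) < J.map (Ideal.Quotient.mk Q) := by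
    intro I J hI hIJ
    refine lt_of_le_of_ne (Ideal.map_mono hIJ.le) fun h => hIJ.ne ?_
    have := congrArg (Ideal.comap (Ideal.Quotient.mk Q)) h
    rwa [Ideal.comap_map_of_surjective' _ Ideal.Quotient.mk_surjective,
      Ideal.comap_map_of_surjective' _ Ideal.Quotient.mk_surjective,
      sup_eq_left.2 (hker _ hI), sup_eq_left.2 (hker _ (hI.trans hIJ.le))] at this
  have l1 : ⊥ < p.map (Ideal.Quotient.mk Q) := by
    have := hmono Q p le_rfl hQp
    rwa [Ideal.map_quotient_self] at this
  have l2 := hmono p q hQp.le hlt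
  have h2 := Ideal.height_le_iff.1 (by exact_mod_cast h1 : _ ≤ ((1 : ℕ) : ℕ∞)) _ p1 l2
  have h2z : (p.map (Ideal.Quotient.mk Q)).height ≤ ((0 : ℕ) : ℕ∞) := by
    rw [Nat.cast_one] at h2
    rw [Order.lt_one_iff.1 h2]; exact bot_le
  have h3 := (Ideal.height_le_iff (n := 0)).1 h2z _ p0 l1
  simp at h3

lemma above_height {Q : Ideal T} {e : ℕ} (hs : ∃ s : Finset T, s.card ≤ e ∧ Q = Ideal.span s)
    {q : Ideal T} (hq : q ∈ above Q) : q.height ≤ ((e + 1 : ℕ) : ℕ∞) := by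
  classical
  obtain ⟨s, hs, rfl⟩ := hs
  obtain ⟨r, hrq, hr⟩ := Set.exists_of_ssubset hq.2.1
  have h := above_min hq hr hrq
  have he : Ideal.span (s : Set T) ⊔ Ideal.span {r} = Ideal.span (insert r s : Finset T) := by
    rw [sup_comm, ← Ideal.span_union]; simp
  rw [he] at h
  refine (Ideal.height_le_card_of_mem_minimalPrimes_span_finset h).trans ?_
  have := Finset.card_insert_le r s
  exact_mod_cast (by omega)

lemma height_of_gen {Q : Ideal T} [Q.IsPrime] {e : ℕ} 
    (hs : ∃ s : Finset T, s.card ≤ e ∧ Q = Ideal.span s) : Q.height ≤ (e : ℕ∞) := by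
  obtain ⟨s, hs, rfl⟩ := hs
  refine (Ideal.height_le_card_of_mem_minimalPrimes_span_finset (s := s) ?_).trans 
    (by exact_mod_cast hs)
  rw [Ideal.minimalPrimes_eq_subsingleton_self]; rfl

/-- the contraction of a special prime has height at most one -/
lemma contract_eq [IsDomain T] (A : Subring T) (q : Ideal T) [q.IsPrime] (hG : GoodAt A q)
    (p : Ideal A) [p.IsPrime] (hp0 : p ≠ ⊥) (hpq : p ≤ q.comap (algebraMap A T)) :
    q.comap (algebraMap A T) = p := by
  refine le_antisymm ?_ hpq
  intro a ha
  obtain ⟨b, hb, hb0⟩ := Submodule.exists_mem_ne_zero_of_ne_bot hp0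
  by_contra hap
  have key : ∀ i : ℕ, ∃ s : T, s ∉ q ∧ s * b ∈ q ^ i := by
    intro i
    obtain ⟨r, hr, s, hs, h, hrs⟩ := hG ((a : T) ^ i) (pow_mem a.2 i) b b.2
    have hrq : r ∈ q := by
      by_contra hrq
      apply hap
      have h1 : (⟨r, hr⟩ : A) * a ^ i = ⟨s, hs⟩ * b := Subtype.ext (by simpa using h)
      have h2 : (⟨r, hr⟩ : A) * a ^ i ∈ p := by rw [h1]; exact p.mul_mem_left _ hb
      rcases Ideal.IsPrime.mem_or_mem ‹_› h2 with h3 | h3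
      · exact absurd (hpq h3) hrq
      · exact Ideal.IsPrime.mem_of_pow_mem ‹_› _ h3
    refine ⟨s, by tauto, ?_⟩
    rw [← h]
    exact Ideal.mul_mem_left _ _ (Ideal.pow_mem_pow (Ideal.mem_comap.1 ha) i)
  apply hb0
  have hnoeth : IsNoetherianRing (Localization.AtPrime q) :=
    IsLocalization.isNoetherianRing q.primeCompl _ inferInstance
  have hinf := Ideal.iInf_pow_eq_bot_of_isLocalRing (maximalIdeal (Localization.AtPrime q))
    Ideal.IsPrime.ne_top'
  have hmem : algebraMap T (Localization.AtPrime q) b ∈ 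
      (⨅ i : ℕ, maximalIdeal (Localization.AtPrime q) ^ i) := by
    rw [Submodule.mem_iInf]
    intro i
    obtain ⟨s, hs, hsb⟩ := key i
    have hu : IsUnit (algebraMap T (Localization.AtPrime q) s) :=
      IsLocalization.map_units (Localization.AtPrime q) (⟨s, hs⟩ : q.primeCompl)
    have h1 := Ideal.mem_map_of_mem (algebraMap T (Localization.AtPrime q)) hsb
    rw [Ideal.map_pow, Localization.AtPrime.map_eq_maximalIdeal, map_mul] at h1
    exact (Ideal.unit_mul_mem_iff_mem _ hu).1 h1
  rw [hinf, Ideal.mem_bot] at hmem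
  have hinj : Function.Injective (algebraMap T (Localization.AtPrime q)) :=
    IsLocalization.injective _ q.primeCompl_le_nonZeroDivisors
  have : (b : T) = 0 := hinj (by rw [hmem, map_zero])
  exact Subtype.ext this

end

end LUFD

end P7part

section P8part
open Polynomial Cardinal IsLocalRing
namespace LUFD

lemma ht_eq {T : Type} [CommRing T] (P : Ideal T) (h : P.IsPrime) :
    P.height = Order.height (⟨P, h⟩ : PrimeSpectrum T) :=
  PrimeSpectrum.height_eq_orderHeight ⟨P, h⟩

section
variable {A T : Type} [CommRing A] [CommRing T] [Algebra A T]

lemma dim_le_zero (p : Ideal A) (c : ℕ) (h : ∀ P ∈ p.primesOver T, P.height ≤ (c : ℕ∞)) :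
    Order.krullDim (p.primesOver T) ≤ (c : WithBot ℕ∞) := by
  refine iSup_le fun s => ?_
  let f : p.primesOver T → PrimeSpectrum T := fun P => ⟨P.1, P.2.1⟩
  have hf : StrictMono f := fun P Q h => h
  have h1 := Order.length_le_height_last (p := s.map f hf)
  have h2 := h s.last.1 s.last.2
  have : s.last.1.IsPrime := s.last.2.1
  have h3 : s.last.1.height = Order.height (s.map f hf).last := by
    rw [ht_eq _ this]; rfl
  rw [h3] at h2
  have h4 : (s.length : ℕ∞) ≤ c := h1.trans h2
  exact_mod_cast h4

lemma dim_le_one [IsDomain T] (p : Ideal A) (b : A) (hb : b ∈ p) (hb0 : algebraMap A T b ≠ 0) (c : ℕ)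
    (h : ∀ P ∈ p.primesOver T, P.height ≤ ((c + 1 : ℕ) : ℕ∞)) :
    Order.krullDim (p.primesOver T) ≤ (c : WithBot ℕ∞) := by
  refine iSup_le fun s => ?_
  let f : p.primesOver T → PrimeSpectrum T := fun P => ⟨P.1, P.2.1⟩
  have hf : StrictMono f := fun P Q h => h
  have hbot : (⟨⊥, Ideal.isPrime_bot⟩ : PrimeSpectrum T) < (s.map f hf).head := by
    show (⊥ : Ideal T) < s.head.1
    rw [bot_lt_iff_ne_bot]
    intro h0
    have hl : s.head.1.LiesOver p := s.head.2.2
    have : b ∈ s.head.1.comap (algebraMap A T) := by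
      rw [hl.1] at hb; exact hb
    rw [h0] at this
    exact hb0 this
  have h1 := Order.length_le_height_last (p := (s.map f hf).cons _ hbot)
  have h2 := h s.last.1 s.last.2
  have : s.last.1.IsPrime := s.last.2.1
  have h3 : s.last.1.height = Order.height ((s.map f hf).cons _ hbot).last := by
    rw [ht_eq _ this, RelSeries.last_cons]; rfl
  rw [h3] at h2
  have h4 := h1.trans h2
  simp only [RelSeries.cons_length, LTSeries.map_length] at h4
  have h5 : s.length ≤ c := by
    have : s.length + 1 ≤ c + 1 := by exact_mod_cast h4
    omega
  exact_mod_cast h5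

lemma le_dim (p : Ideal A) (c : ℕ) (f : ℕ → Ideal T) (hf : ∀ i ≤ c, f i ∈ p.primesOver T)
    (hlt : ∀ i < c, f i < f (i+1)) : (c : WithBot ℕ∞) ≤ Order.krullDim (p.primesOver T) := by
  let s : LTSeries (p.primesOver T) :=
    { length := c
      toFun := fun i => ⟨f i, hf i (by omega)⟩
      step := fun i => hlt i i.2 }
  exact le_iSup (fun s : LTSeries (p.primesOver T) => (s.length : WithBot ℕ∞)) s

lemma le_dim_one [IsNoetherianRing A] [IsNoetherianRing T] (p : Ideal A) [p.IsPrime]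
    (hp : p.height = 1) (q : Ideal T) (hq : q ∈ p.primesOver T) (c : ℕ) 
    (hc : ((c + 1 : ℕ) : ℕ∞) ≤ q.height) :
    (c : WithBot ℕ∞) ≤ Order.krullDim (p.primesOver T) := by
  have hqp : q.IsPrime := hq.1
  have hqo : q.LiesOver p := hq.2
  have h1 := Ideal.height_le_height_add_of_liesOver p q
  rw [hp] at h1
  set I := p.map (algebraMap A T)
  have hIq : I ≤ q := Ideal.map_le_iff_le_comap.2 hqo.1.le
  have hkq : RingHom.ker (Ideal.Quotient.mk I) ≤ q := by rwa [Ideal.mk_ker]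
  have p2 : (q.map (Ideal.Quotient.mk I)).IsPrime :=
    Ideal.map_isPrime_of_surjective Ideal.Quotient.mk_surjective hkq
  have h2 : (c : ℕ∞) ≤ (q.map (Ideal.Quotient.mk I)).height := by
    have h3 := hc.trans h1
    rw [Nat.cast_add, Nat.cast_one, add_comm] at h3
    exact (ENat.add_le_add_iff_left (by simp)).1 h3
  rw [ht_eq _ p2] at h2
  obtain ⟨s, hs, hlen⟩ := Order.exists_series_of_le_height _ h2
  rw [← hlen]
  have hlast : s.last.asIdeal = q.map (Ideal.Quotient.mk I) := by rw [hs]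
  let g : ∀ P : PrimeSpectrum (T ⧸ I), P ≤ s.last → p.primesOver T := fun P hP => 
    ⟨P.asIdeal.comap (Ideal.Quotient.mk I), by
      refine ⟨inferInstance, ⟨?_⟩⟩
      apply le_antisymm
      · intro a ha
        rw [Ideal.under_def, Ideal.mem_comap, Ideal.mem_comap, 
          Ideal.Quotient.eq_zero_iff_mem.2 (Ideal.mem_map_of_mem _ ha)]
        exact Ideal.zero_mem _
      · intro a ha
        rw [hqo.1]
        have h5 : P.asIdeal.comap (Ideal.Quotient.mk I) ≤ q := by
          have : P.asIdeal ≤ q.map (Ideal.Quotient.mk I) := by rw [← hlast]; exact hP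
          refine (Ideal.comap_mono this).trans ?_
          rw [Ideal.comap_map_of_surjective' _ Ideal.Quotient.mk_surjective, sup_eq_left.2 hkq]
        exact h5 ha⟩
  let s' : LTSeries (p.primesOver T) :=
    { length := s.length
      toFun := fun i => g (s i) (LTSeries.monotone s (Fin.le_last i))
      step := fun i => by
        have h6 := s.step i
        have h7 : (s i.castSucc).asIdeal < (s i.succ).asIdeal := h6
        show (s i.castSucc).asIdeal.comap (Ideal.Quotient.mk I) < 
          (s i.succ).asIdeal.comap (Ideal.Quotient.mk I)
        refine lt_of_le_of_ne (Ideal.comap_mono h7.le) fun h => h7.ne ?_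
        exact Ideal.comap_injective_of_surjective _ Ideal.Quotient.mk_surjective h }
  exact le_iSup (fun s : LTSeries (p.primesOver T) => (s.length : WithBot ℕ∞)) s'

end

lemma height_lt {T : Type} [CommRing T] [IsNoetherianRing T] {P Q : Ideal T} [P.IsPrime] 
    [Q.IsPrime] (h : P < Q) (c : ℕ) (hc : (c : ℕ∞) ≤ P.height) : ((c+1 : ℕ) : ℕ∞) ≤ Q.height := by
  by_contra hcon
  have : Q.height ≤ (c : ℕ∞) := by
    rw [not_le] at hcon
    exact Order.le_of_lt_add_one (by exact_mod_cast hcon)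
  exact absurd (Ideal.height_le_iff.1 this P ‹_› h) (not_lt.2 hc)

lemma Qi_height_ge (n : ℕ) : ∀ i ≤ n, (i : ℕ∞) ≤ (Qi n i).height
  | 0, _ => by simp
  | i+1, h => by
    have := Qi_prime n i
    have := Qi_prime n (i+1)
    exact height_lt (Qi_lt n i (by omega)) i (Qi_height_ge n i (by omega))

lemma Qi_height_le (n i : ℕ) : (Qi n i).height ≤ (i : ℕ∞) := by
  have := Qi_prime n i
  exact height_of_gen (Qi_gen n i)

lemma Qi_mono (n : ℕ) {i j : ℕ} (h : i ≤ j) (hj : j ≤ n) : Qi n i ≤ Qi n j := by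
  induction j with
  | zero => rw [Nat.le_zero.1 h]
  | succ j ih =>
    rcases Nat.lt_or_ge i (j+1) with h1 | h1
    · exact (ih (by omega) (by omega)).trans (Qi_lt n j (by omega)).le
    · rw [show i = j + 1 by omega]

end LUFD

end P8part

section P9part
open Polynomial Cardinal IsLocalRing
namespace LUFD

lemma exists_list {T : Type} [CommRing T] [IsNoetherianRing T] (P : Ideal T) :
    ∃ l : List T, lspan l = P := by
  obtain ⟨s, hs⟩ := (isNoetherianRing_iff_ideal_fg T).1 inferInstance P
  refine ⟨s.toList, ?_⟩
  rw [← hs, lspan]; simp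

/-- the controlled primes -/
noncomputable def theData (n e t : ℕ) (het : e ≤ t) (htn : t ≤ n) : Data (PS n) where
  Q0 := Qi n t
  Qs := above (Qi n e)
  q0prime := Qi_prime n t
  prime := fun _ hq => hq.1
  fin := fun _ hr => above_fin fun h => hr (Qi_mono n het htn h)
  cop := fun a b => by
    have := ufd_PS n
    exact cop_of_ufd a b

theorem exists_main (n e t : ℕ) (het : e ≤ t) (htn : t + 1 ≤ n) (hen : e + 2 ≤ n) :
    ∃ A : Subring (PS n), ∃ _ : IsNoetherianRing A, ∃ _ : IsLocalRing A,
      UniqueFactorizationMonoid A ∧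
      (∃ e : AdicCompletion (maximalIdeal A) A ≃+* PS n, ∀ a,
        e (algebraMap A (AdicCompletion (maximalIdeal A) A) a) = a) ∧
      Order.krullDim ((⊥ : Ideal A).primesOver (PS n)) = (t : WithBot ℕ∞) ∧
      ∀ p : Ideal A, p.IsPrime → p.height = 1 → 
        Order.krullDim (p.primesOver (PS n)) = (e : WithBot ℕ∞) := by
  let D := theData n e t het (by omega)
  have hm : (n : ℕ∞) ≤ (maximalIdeal (PS n)).height := by
    rw [← Qi_top]; exact Qi_height_ge n n le_rfl
  have hmP : ∀ P : Ideal (PS n), P.IsPrime → ∀ k : ℕ, k < n → P.height ≤ (k : ℕ∞) → 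
      ¬ maximalIdeal (PS n) ^ 2 ≤ P := by
    intro P hP k hk hht h
    have h1 : maximalIdeal (PS n) ≤ P := hP.le_of_pow_le h
    have h2 := hm.trans ((Ideal.height_mono h1).trans hht)
    have : n ≤ k := by exact_mod_cast h2
    omega
  have hQ0p : D.Q0.IsPrime := D.q0prime
  have hQ0 : D.Q0.height ≤ (t : ℕ∞) := Qi_height_le n t
  have hQs : ∀ q ∈ D.Qs, q.height ≤ ((e+1 : ℕ) : ℕ∞) := fun q hq => above_height (Qi_gen n e) hq
  obtain ⟨A, hG, hD⟩ := exists_A (card_PS n) D (maximalIdeal (PS n) ^ 2)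
    ((isNoetherianRing_iff_ideal_fg _).1 inferInstance _) (hmP _ D.q0prime t (by omega) hQ0)
    (fun q hq => hmP q hq.1 (e+1) (by omega) (hQs q hq))
  have hA : Contr A := fun l c => (hD l c).tb
  have h2 : ∀ c : PS n, ∃ s ∈ A, s - c ∈ maximalIdeal (PS n) ^ 2 := fun c => (hD [] c).ta
  have iN := noeth hA
  have iL := isLocal hA
  have iH := localHom hA
  have iU := isUFD D.cop hA h2
  refine ⟨A, iN, iL, iU, exists_completion hA h2, ?_, ?_⟩
  · apply le_antisymm
    · apply dim_le_zero
      rintro P ⟨hP, hPo⟩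
      by_contra hcon
      have hge : ((t+1 : ℕ) : ℕ∞) ≤ P.height := by
        rw [not_le] at hcon
        rw [Nat.cast_add, Nat.cast_one]; exact Order.add_one_le_of_lt hcon
      obtain ⟨l, rfl⟩ := exists_list P
      obtain ⟨s, hs, hs0, hsl⟩ := (hD l 0).tc
        (fun h => hcon ((Ideal.height_mono h).trans hQ0))
        (fun q hq hlq => by
          by_contra hne
          have := D.prime q hq
          have h3 := height_lt (lt_of_le_of_ne hlq hne) _ hge
          have h4 : t + 1 + 1 ≤ e + 1 := by exact_mod_cast h3.trans (hQs q hq)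
          omega)
      have : (⟨s, hs⟩ : A) ∈ (⊥ : Ideal A) := by rw [hPo.1]; exact hsl
      exact hs0 (congrArg Subtype.val this)
    · refine le_dim _ t (fun i => Qi n i) ?_ (fun i hi => Qi_lt n i (by omega))
      intro i hi
      refine ⟨Qi_prime n i, ⟨le_antisymm bot_le ?_⟩⟩
      intro a ha
      have h3 : (a : PS n) ∈ Qi n i := ha
      exact Subtype.ext (hG.1 a a.2 (Qi_mono n hi (by omega) h3))
  · intro p hp hht
    have hp0 : p ≠ ⊥ := by
      rintro rfl; simp at hht
    obtain ⟨b, hbp, hb⟩ := hp.exists_mem_prime_of_ne_bot hp0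
    have hbP : (Ideal.span {b}).IsPrime := (Ideal.span_singleton_prime hb.ne_zero).2 hb
    have hbs : Ideal.span {b} ≠ ⊥ := by rw [Ne, Ideal.span_singleton_eq_bot]; exact hb.ne_zero
    have hpb : Ideal.span {b} = p := by
      by_contra hne
      have hlt : Ideal.span {b} < p :=
        lt_of_le_of_ne ((Ideal.span_singleton_le_iff_mem _).2 hbp) hne
      have i0 : (⊥ : Ideal A).IsPrime := Ideal.isPrime_bot
      have h3 := height_lt (bot_lt_iff_ne_bot.2 hbs) 0 (by simp)
      have h4 := height_lt hlt _ h3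
      rw [hht] at h4
      have : 0 + 1 + 1 ≤ 1 := by exact_mod_cast h4
      omega
    have hb0 : (b : PS n) ≠ 0 := fun h => hb.ne_zero (Subtype.ext h)
    have hbQ0 : (b : PS n) ∉ D.Q0 := fun h => hb0 (hG.1 b b.2 h)
    have hbm : (b : PS n) ∈ maximalIdeal (PS n) := by
      rw [IsLocalRing.mem_maximalIdeal, mem_nonunits_iff]
      intro hu
      exact hb.not_isUnit (isUnit_of_map_unit (algebraMap A (PS n)) b hu)
    obtain ⟨q, hq, hbq⟩ := exists_above (Qi_prime n e) (P := maximalIdeal (PS n))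
      (by rw [← Qi_top]; exact Qi_mono n (by omega) le_rfl) 
      (fun h => hbQ0 (Qi_mono n het (by omega) h)) hbm
    have hqP : q.IsPrime := hq.1
    have hqp : q.comap (algebraMap A (PS n)) = p := by
      rw [← hpb]
      exact contract_eq A q (hG.2 q hq) _ hbs ((Ideal.span_singleton_le_iff_mem _).2 hbq)
    apply le_antisymm
    · refine dim_le_one p b hbp hb0 e ?_
      rintro P ⟨hP, hPo⟩
      by_contra hcon
      have hbP : (b : PS n) ∈ P := by
        have : b ∈ P.under A := by rw [← hPo.1]; exact hbp
        exact this
      obtain ⟨l, rfl⟩ := exists_list P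
      obtain ⟨s, hs, hsl, hsq⟩ := (hD l b).td
        (fun h => hbQ0 (h hbP))
        (fun q hq hlq => hcon ((Ideal.height_mono hlq).trans (hQs q hq)))
        b.2 hb0
      have : (⟨s, hs⟩ : A) ∈ p := by rw [hPo.1]; exact hsl
      rw [← hqp] at this
      exact hsq q hq hbq this
    · refine le_dim_one p hht q ⟨hqP, ⟨hqp.symm⟩⟩ e ?_
      have := Qi_prime n e
      exact height_lt hq.2.1 e (Qi_height_ge n e (by omega))

end LUFD

end P9part

namespace LUFD

lemma alphaAt_eq {T : Type} [CommRing T] (X : LocalUFDWithCompletion T)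
    (p : Ideal X.A) (hp : p.IsPrime) :
    letI := X.toCompletion.toAlgebra
    alphaAt X p hp = Order.krullDim (p.primesOver T) := by
  letI := X.toCompletion.toAlgebra
  have h1 : alphaAt X p hp = ringKrullDim (TensorProduct X.A T p.ResidueField) := rfl
  rw [h1, ringKrullDim_eq_of_ringEquiv
    (Algebra.TensorProduct.comm X.A T p.ResidueField).toRingEquiv]
  exact (Order.krullDim_eq_of_orderIso (PrimeSpectrum.primesOverOrderIsoFiber X.A T p)).symm

lemma idealHt_eq {A : Type} [CommRing A] (p : Ideal A) (hp : p.IsPrime) :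
    idealHt p = p.height := by
  rw [ht_eq p hp]
  apply le_antisymm
  · exact iInf₂_le (⟨p, hp⟩ : PrimeSpectrum A) le_rfl
  · refine le_iInf₂ fun q hq => Order.height_mono hq

end LUFD

/-- **Example.** Let `T = ℂ[[x₁, …, xₙ]]` with `n ≥ 2`. For any integers `d`, `t` with
`1 ≤ d ≤ n − 1`, `0 ≤ t ≤ n − 1` and `d − 1 ≤ t` there is a local UFD `A` whose
completion is `T` with `α(A, (0)) = t` and `α(A, pA) = d − 1` for every height one prime
ideal `pA` of ` A`. -/
theorem exists_local_UFD_completion_powerSeries (n : ℕ) (hn : 2 ≤ n)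
    (d t : ℕ) (hd1 : 1 ≤ d) (hd2 : d ≤ n - 1) (ht2 : t ≤ n - 1) (hdt : d - 1 ≤ t) :
    ∃ X : LocalUFDWithCompletion (MvPowerSeries (Fin n) ℂ),
      alphaAt X ⊥ Ideal.bot_prime = (t : WithBot ℕ∞) ∧
      ∀ (p : Ideal X.A) (hp : p.IsPrime), idealHt p = 1 →
        alphaAt X p hp = ((d - 1 : ℕ) : WithBot ℕ∞) := by
  obtain ⟨A, iN, iL, iU, ⟨e, he⟩, h0, h1⟩ :=
    LUFD.exists_main n (d - 1) t hdt (by omega) (by omega)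
  let X : LocalUFDWithCompletion (MvPowerSeries (Fin n) ℂ) :=
    { A := A
      toCompletion := A.subtype
      completionEquiv := e
      completionEquiv_comp := he }
  refine ⟨X, ?_, ?_⟩
  · rw [LUFD.alphaAt_eq]
    exact h0
  · intro p hp hht
    rw [LUFD.alphaAt_eq]
    rw [LUFD.idealHt_eq p hp] at hht
    exact h1 p hp hht
end

section
/- Let (T, m) be a complete local equidimensional ring with dim T ≥ 2 such that no integer of T is a zerodivisor, and let R₀ be the localization of the prime subring of T at its contraction of m (so R₀ is ℚ, ℤ_p for a prime p, or ℤ_{(p)} for a prime p). Then for every integer t with 0 ≤ t ≤ dim T − 1, there exists a prime ideal P of T of height t such that P ∩ R₀ = (0). -/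
open IsLocalRing

/-- The localization of the prime subring of a local ring `T` at the contraction of the
maximal ideal, realized as a subring of `T`: its elements are the fractions `a/b` with
`a`, `b` integers and `b` invertible in `T` (equivalently, `b` outside the contraction
of the maximal ideal). -/
def primeSubringLoc (T : Type*) [CommRing T] [IsLocalRing T] : Subring T where
  carrier := {x : T | ∃ a b : ℤ, IsUnit ((b : ℤ) : T) ∧ x * ((b : ℤ) : T) = ((a : ℤ) : T)}
  one_mem' := ⟨1, 1, by simp⟩
  zero_mem' := ⟨0, 1, by simp⟩
  mul_mem' := by
    rintro x₁ x₂ ⟨a₁, b₁, hu₁, h₁⟩ ⟨a₂, b₂, hu₂, h₂⟩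
    refine ⟨a₁ * a₂, b₁ * b₂, by push_cast; exact hu₁.mul hu₂, ?_⟩
    push_cast
    calc x₁ * x₂ * ((b₁ : T) * (b₂ : T)) = (x₁ * (b₁ : T)) * (x₂ * (b₂ : T)) := by ring
    _ = ((a₁ : T)) * ((a₂ : T)) := by rw [h₁, h₂]
  add_mem' := by
    rintro x₁ x₂ ⟨a₁, b₁, hu₁, h₁⟩ ⟨a₂, b₂, hu₂, h₂⟩
    refine ⟨a₁ * b₂ + a₂ * b₁, b₁ * b₂, by push_cast; exact hu₁.mul hu₂, ?_⟩
    push_cast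
    calc (x₁ + x₂) * ((b₁ : T) * (b₂ : T))
        = (x₁ * (b₁ : T)) * (b₂ : T) + (x₂ * (b₂ : T)) * (b₁ : T) := by ring
    _ = (a₁ : T) * (b₂ : T) + (a₂ : T) * (b₁ : T) := by rw [h₁, h₂]
  neg_mem' := by
    rintro x ⟨a, b, hu, h⟩
    exact ⟨-a, b, hu, by push_cast; rw [neg_mul, h]⟩

/-- Adding an element outside all minimal primes of an ideal raises the height. -/
lemma height_step {R : Type*} [CommRing R] {I J : Ideal R} {x : R} {k : ℕ∞}
    (hk : k ≤ I.height) (hIJ : I ≤ J) (hxJ : x ∈ J)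
    (hx : ∀ q ∈ I.minimalPrimes, x ∉ q) : k + 1 ≤ J.height := by
  rw [J.height_eq_inf_minimalPrimes]
  refine le_iInf₂ fun Q hQ => ?_
  have hQp := hQ.isPrime
  obtain ⟨q, hq, hqQ⟩ := Ideal.exists_minimalPrimes_le (hIJ.trans hQ.le)
  have hqp := hq.isPrime
  have hlt : q < Q := lt_of_le_of_ne hqQ (by rintro rfl; exact hx _ hq (hQ.le hxJ))
  refine le_trans ?_ (Ideal.height_add_one_le_of_lt_of_isPrime hlt)
  gcongr
  exact hk.trans (Ideal.height_mono hq.le)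

/-- Inductive choice of `i` elements that are part of a system of parameters together
with `y`. -/
lemma exists_params {R : Type*} [CommRing R] [IsLocalRing R] [IsNoetherianRing R] {y : R}
    (hy : 1 ≤ (Ideal.span {y}).height) (i : ℕ)
    (hi : (i : ℕ∞) + 1 ≤ (maximalIdeal R).height) :
    ∃ s : Finset R, s.card ≤ i ∧ (s : Set R) ⊆ maximalIdeal R ∧
      (i : ℕ∞) ≤ (Ideal.span (s : Set R)).height ∧
      (i : ℕ∞) + 1 ≤ (Ideal.span (insert y (s : Set R))).height := by
  classical
  induction i with
  | zero => exact ⟨∅, by simp, by simp, by simp, by simpa using hy⟩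
  | succ i ih =>
    have hi' : (i : ℕ∞) + 1 < (maximalIdeal R).height := by
      rw [← ENat.add_one_le_iff (by exact_mod_cast ENat.coe_ne_top (i + 1))]
      exact_mod_cast hi
    obtain ⟨s, hs, hsm, h1, h2⟩ := ih hi'.le
    let A := (Ideal.span (s : Set R)).minimalPrimes
    let B := (Ideal.span ((insert y s : Finset R) : Set R)).minimalPrimes
    have hfin : (A ∪ B).Finite :=
      (Ideal.finite_minimalPrimes_of_isNoetherianRing R _).union
        (Ideal.finite_minimalPrimes_of_isNoetherianRing R _)
    have hpr : ∀ q ∈ A ∪ B, q.IsPrime ∧ q.height ≤ (i : ℕ∞) + 1 := by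
      rintro q (hq | hq)
      · refine ⟨hq.isPrime, (Ideal.height_le_card_of_mem_minimalPrimes_span_finset hq).trans ?_⟩
        exact_mod_cast hs.trans (Nat.le_succ i)
      · refine ⟨hq.isPrime, (Ideal.height_le_card_of_mem_minimalPrimes_span_finset hq).trans ?_⟩
        exact_mod_cast (Finset.card_insert_le y s).trans (Nat.succ_le_succ hs)
    have hx : ∃ x ∈ maximalIdeal R, ∀ q ∈ A ∪ B, x ∉ q := by
      by_contra! hcon
      have hsub : ((maximalIdeal R : Ideal R) : Set R) ⊆
          ⋃ q ∈ (hfin.toFinset : Set (Ideal R)), ((id q : Ideal R) : Set R) := by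
        intro x hx
        obtain ⟨q, hq, hxq⟩ := hcon x hx
        simp only [Set.mem_iUnion]
        exact ⟨q, by simpa using hq, hxq⟩
      obtain ⟨q, hq, hle⟩ := (Ideal.subset_union_prime (f := id) ⊤ ⊤
        (fun q hq _ _ => (hpr q (by simpa using hq)).1)).1 hsub
      exact absurd ((Ideal.height_mono hle).trans (hpr q (by simpa using hq)).2) (not_le.2 hi')
    obtain ⟨x, hxm, hx⟩ := hx
    refine ⟨insert x s, (Finset.card_insert_le x s).trans (Nat.succ_le_succ hs), ?_, ?_, ?_⟩
    · rw [Finset.coe_insert]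
      exact Set.insert_subset hxm hsm
    · push_cast
      exact height_step h1 (Ideal.span_mono (Set.subset_insert _ _))
        (Ideal.subset_span (Set.mem_insert _ _)) (fun q hq => hx q (Or.inl hq))
    · push_cast
      refine height_step h2 (x := x) (Ideal.span_mono ?_) (Ideal.subset_span (by simp))
        (fun q hq => hx q (Or.inr (by simpa [B] using hq)))
      exact Set.insert_subset_insert (Set.subset_insert _ _)

/-- A prime of height `t` avoiding `y`. -/
lemma exists_prime_height_avoid {R : Type*} [CommRing R] [IsLocalRing R] [IsNoetherianRing R]
    {y : R} (hy : 1 ≤ (Ideal.span {y}).height) (t : ℕ)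
    (ht : (t : ℕ∞) + 1 ≤ (maximalIdeal R).height) :
    ∃ P : Ideal R, P.IsPrime ∧ P.height = t ∧ y ∉ P := by
  obtain ⟨s, hs, hsm, h1, h2⟩ := exists_params hy t ht
  have hne : Ideal.span (s : Set R) ≠ ⊤ := fun h =>
    (maximalIdeal.isMaximal R).ne_top (top_le_iff.1 (h ▸ Ideal.span_le.2 hsm))
  obtain ⟨P, hP⟩ := Ideal.nonempty_minimalPrimes hne
  have hle : P.height ≤ t :=
    (Ideal.height_le_card_of_mem_minimalPrimes_span_finset hP).trans (by exact_mod_cast hs)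
  refine ⟨P, hP.isPrime, le_antisymm hle (h1.trans (Ideal.height_mono hP.le)), fun hyP => ?_⟩
  have h3 : Ideal.span (insert y (s : Set R)) ≤ P :=
    Ideal.span_le.2 (Set.insert_subset hyP (fun z hz => hP.le (Ideal.subset_span hz)))
  have h4 := (h2.trans (Ideal.height_mono h3)).trans hle
  have h5 : t + 1 ≤ t := by exact_mod_cast h4
  omega

lemma idealHt_eq_height {R : Type*} [CommRing R] (P : Ideal R) (hP : P.IsPrime) :
    idealHt P = P.height := by
  refine le_antisymm ?_ ?_
  · refine (iInf₂_le (⟨P, hP⟩ : PrimeSpectrum R) le_rfl).trans ?_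
    rw [← PrimeSpectrum.height_eq_orderHeight]
  · refine le_iInf₂ fun q hq => ?_
    rw [← PrimeSpectrum.height_eq_orderHeight]
    exact Ideal.height_mono hq

/-- There is an element of height at least one (the residue characteristic, or `1`) such that
a prime avoiding it contains no nonzero integer. -/
lemma exists_test_element {R : Type*} [CommRing R] [IsLocalRing R]
    (hint : ∀ n : ℤ, n ≠ 0 → ((n : ℤ) : R) ∈ nonZeroDivisors R) :
    ∃ y : R, 1 ≤ (Ideal.span {y}).height ∧
      ∀ P : Ideal R, P.IsPrime → y ∉ P → ∀ a : ℤ, (a : R) ∈ P → a = 0 := by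
  by_cases h : ∃ a : ℤ, a ≠ 0 ∧ (a : R) ∈ maximalIdeal R
  · obtain ⟨a, ha, ham⟩ := h
    let I : Ideal ℤ := (maximalIdeal R).comap (Int.castRingHom R)
    have hI : I.IsPrime := Ideal.comap_isPrime _ _
    obtain ⟨p, hp⟩ := (IsPrincipalIdealRing.principal I).principal
    have hp' : ∀ n : ℤ, (n : R) ∈ maximalIdeal R ↔ p ∣ n := fun n => by
      have : n ∈ I ↔ p ∣ n := by rw [hp]; exact Ideal.mem_span_singleton
      simpa [I] using this
    have hp0 : p ≠ 0 := by
      rintro rfl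
      exact ha (zero_dvd_iff.1 ((hp' a).1 ham))
    have hnu : ¬ IsUnit p := fun hu =>
      hI.ne_top (by rw [hp]; exact Ideal.span_singleton_eq_top.2 hu)
    refine ⟨(p : R), Ideal.one_le_height_span_singleton_of_mem_nonZeroDivisors (hint p hp0),
      fun P hP hpP n hn => ?_⟩
    by_contra hn0
    obtain ⟨b, hnb, hb⟩ :=
      (FiniteMultiplicity.of_not_isUnit hnu hn0).exists_eq_pow_mul_and_not_dvd
    rw [hnb, Int.cast_mul, Int.cast_pow] at hn
    rcases hP.mem_or_mem hn with h1 | h1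
    · exact hpP (hP.mem_of_pow_mem _ h1)
    · exact hb ((hp' b).1 (IsLocalRing.le_maximalIdeal hP.ne_top h1))
  · push Not at h
    refine ⟨1, by simp, fun P hP _ a ha => ?_⟩
    by_contra h0
    exact h a h0 (IsLocalRing.le_maximalIdeal hP.ne_top ha)

/-- Let `(T, m)` be a complete local equidimensional ring with `dim T ≥ 2` such that no
integer of `T` is a zerodivisor, and let `R₀` be the localization of the prime subring
of `T` at its contraction of `m`. Then for every integer `t` with `0 ≤ t ≤ dim T − 1`
there is a prime ideal `P` of `T` of height `t` with `P ∩ R₀ = (0)`. -/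
theorem exists_prime_of_height_disjoint_primeSubringLoc {T : Type*} [CommRing T]
    [IsLocalRing T] [IsNoetherianRing T] [IsAdicComplete (maximalIdeal T) T]
    (hequi : IsEquidim T) (hdim : 2 ≤ ringKrullDim T)
    (hint : ∀ n : ℤ, n ≠ 0 → ((n : ℤ) : T) ∈ nonZeroDivisors T)
    (t : ℕ) (ht : (t : WithBot ℕ∞) + 1 ≤ ringKrullDim T) :
    ∃ P : Ideal T, P.IsPrime ∧ idealHt P = (t : ℕ∞) ∧
      Ideal.comap (primeSubringLoc T).subtype P = ⊥ := by
  have ht' : (t : ℕ∞) + 1 ≤ (maximalIdeal T).height := by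
    rw [← IsLocalRing.maximalIdeal_height_eq_ringKrullDim] at ht
    exact_mod_cast ht
  obtain ⟨y, hy, hyP⟩ := exists_test_element hint
  obtain ⟨P, hP, hPt, hPy⟩ := exists_prime_height_avoid hy t ht'
  refine ⟨P, hP, (idealHt_eq_height P hP).trans hPt, ?_⟩
  rw [eq_bot_iff]
  rintro ⟨x, a, b, hb, hab⟩ hx
  have hxP : x ∈ P := hx
  have ha : a = 0 := hyP P hP hPy a (hab ▸ P.mul_mem_right _ hxP)
  rw [ha, Int.cast_zero] at hab
  have hx0 : x = 0 := (hb.mul_left_eq_zero).1 hab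
  exact Subtype.ext hx0
end
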